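/- arXiv:2406.13780 — 2 statements merged into one kernel-verified Lean document; each statement's English description precedes it below -/
import Mathlib

section
/- Let q be a sufficiently large prime, r ≥ 2 an integer, s_1,…,s_r positive integers, s = s_1+⋯+s_r, and let F, the partitions S_1(y),…,S_r(y), and H be as in the context, with H good. Set a := ⌈q^{2−1/(s−1)} (log₂ q)^3⌉. Then the number of sets A ⊆ X with |A| = a such that H[A] contains no subgraph isomorphic to K_{s_1,…,s_r} is at most (q^{1/(s−1)})^{a}. -/
/-!
The proof is a hypergraph container argument run on blocks `y` instead of on copies of
`K = K_{s_1,…,s_r}`. If `A` induces no copy of `K` in `H`, then for every `y` some part satisfies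
`|A ∩ S_i(y)| < s_i` (`exists_small_part`). Only this consequence of `K`-freeness is used,
together with the facts that each `x` lies in `q + 1` blocks and that two vertices lie in at most
one common block (`C₄`-freeness).

*One round.* Write `θ = q^{-1/(s-1)}` and let `U` be a set with `|U| ≥ C₀ q²`. Goodness supplies
about `N_0 = |U| q / (8 γ log q)` blocks all of whose parts meet `U` in between `γ / (10 r)` and `γ`
vertices. A decision tree asks, for one vertex after another, whether it belongs to `A`. At level
`k` it keeps a family of at least `N_k ≈ N_0 θ^k` blocks in which the vertices known to be in `A`
already fill `k` of the `s` slots, each vertex lying in at most `D_k + 1 = q θ^k + 1` of them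
(`PartialFill`). As long as most of `U` has not been asked about, some remaining vertex fills one
more slot in at least `g_k` of these blocks (`exists_rich_vertex`) without spoiling the degree
bound of the next level (`PartialFill.extend`). A yes therefore produces `g_k` new blocks of level
`k + 1`, so `β = ⌈θ q²⌉` yeses suffice per level. Level `s` cannot be reached, since a block with
all slots filled contradicts the choice of `A`; hence after at most `s β` yeses a proportion of order
`1 / log q` of `U` has been excluded (`covered_of_partialFill`, `covered_shrink`). A tree with few
yeses has few leaves, and the leaves are the containers.

*Iteration.* `O(log² q)` rounds shrink `X` to containers of size at most `C₀ q²`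
(`covered_iterate`), and their number is `2^{O(a)}` because each of the `O(θ q² log² q)` yeses costs
a factor `q^{O(1)}`. Each container has at most `(e C₀ q² / a)^a` subsets of size `a`, and
`a ≥ θ q² log³ q`, so the total is at most `(O(1) / (θ log³ q))^a ≤ (1 / θ)^a` for large `q`
(`count_of_containers`, `final_bound`).
-/

/-- `G` contains a copy of `F` as a (not necessarily induced) subgraph, i.e. there is an
injective graph homomorphism from `F` to `G`. -/
def ContainsCopy {α β : Type*} (F : SimpleGraph α) (G : SimpleGraph β) : Prop :=
  ∃ f : α → β, Function.Injective f ∧ ∀ ⦃a b : α⦄, F.Adj a b → G.Adj (f a) (f b)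

/-- The `F`-independence number of a finite graph `G`: the maximum size of a set `S` of
vertices such that the induced subgraph `G[S]` contains no copy of `F`. -/
noncomputable def fIndepNum {α β : Type*} [Fintype β] (F : SimpleGraph α) (G : SimpleGraph β) :
    ℕ :=
  sSup {k | ∃ S : Finset β, S.card = k ∧ ¬ ContainsCopy F (G.induce (S : Set β))}

/-- `f_{F,H}(n)`: the minimum of the `F`-independence number over all `H`-free graphs on
`n` vertices. -/
noncomputable def minFIndep {α γ : Type*} (F : SimpleGraph α) (H : SimpleGraph γ) (n : ℕ) : ℕ :=
  sInf {k | ∃ G : SimpleGraph (Fin n), ¬ ContainsCopy H G ∧ fIndepNum F G = k}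

/-- The Turán number `ex(n, F)`: the maximum number of edges of an `F`-free graph on `n`
vertices. -/
noncomputable def turanNum (n : ℕ) {α : Type*} (F : SimpleGraph α) : ℕ :=
  sSup {k | ∃ G : SimpleGraph (Fin n), ¬ ContainsCopy F G ∧ k = Nat.card G.edgeSet}

/-! ### Levels of the decision tree -/

/-- `L` is a family of blocks (indices `y`) in which the chosen vertices `T` fill at least `t i`
slots of the part `S y i`. Each block carries a set `R y ⊆ U` of at most `Γ` vertices that are still
usable in it, with at least `ρ` of them in every part, and each vertex is usable in at most `D + 1`
blocks of `L`. -/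
structure PartialFill {X Y ι : Type*} [DecidableEq X] (S : Y → ι → Finset X) (U : Finset X)
    (Γ : ℝ) (t : ι → ℕ) (T : Finset X) (D ρ : ℝ) (L : Finset Y) (R : Y → Finset X) : Prop where
  fill : ∀ y ∈ L, ∀ i, t i ≤ (T ∩ S y i).card
  sub : ∀ y ∈ L, ∀ x ∈ R y, ∃ i, x ∈ S y i
  subU : ∀ y ∈ L, R y ⊆ U
  cardR : ∀ y ∈ L, ((R y).card : ℝ) ≤ Γ
  big : ∀ y ∈ L, ∀ i, ρ ≤ ((R y ∩ S y i).card : ℝ)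
  deg : ∀ x, ((L.filter fun y => x ∈ R y).card : ℝ) ≤ D + 1

theorem sum_inter_card {X Y : Type*} [DecidableEq X] (L : Finset Y) (R : Y → Finset X)
    (B : Finset X) :
    ∑ y ∈ L, ((R y ∩ B).card : ℝ) = ∑ x ∈ B, ((L.filter fun y => x ∈ R y).card : ℝ) := by
  have h := Finset.sum_card_bipartiteAbove_eq_sum_card_bipartiteBelow
    (s := L) (t := B) (fun y x => x ∈ R y)
  have e : ∀ y, Finset.bipartiteAbove (fun y x => x ∈ R y) B y = R y ∩ B := by
    intro y; ext x; simp [Finset.bipartiteAbove, and_comm]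
  simp only [e, Finset.bipartiteBelow] at h
  exact_mod_cast h

theorem sum_inter_le {X Y : Type*} [DecidableEq X] (L : Finset Y) (R : Y → Finset X)
    (B : Finset X) (D : ℝ) (hD : ∀ x, ((L.filter fun y => x ∈ R y).card : ℝ) ≤ D) :
    ∑ y ∈ L, ((R y ∩ B).card : ℝ) ≤ D * B.card := by
  rw [sum_inter_card]
  calc _ ≤ ∑ x ∈ B, D := Finset.sum_le_sum fun x _ => hD x
    _ = _ := by simp [mul_comm]

/-- Here `L` is the current level and `L'` the part of the next level built so far. The vertices
that reach degree `D'` in `L'` form the saturated set `Sat`. Few blocks of `L` have a part that is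
mostly saturated, so averaging over the other blocks gives an unasked vertex `v ∈ W` lying in the
`i`-th part of at least `g` of them. -/
theorem exists_rich_vertex {X Y ι : Type*} [DecidableEq X] [DecidableEq Y]
    {S : Y → ι → Finset X} {U : Finset X} {Γ : ℝ} {t t' : ι → ℕ} {T : Finset X}
    {D ρ D' : ℝ} {L L' : Finset Y} {R R' : Y → Finset X} {ρ' N N' η g : ℝ} {W : Finset X} (i : ι)
    (h : PartialFill S U Γ t T D ρ L R) (h' : PartialFill S U Γ t' T D' ρ' L' R')
    (hN : N ≤ L.card) (hN' : L'.card ≤ N')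
    (hW : W ⊆ U) (hη : ((U \ W).card : ℝ) ≤ η)
    (hD : 0 ≤ D) (hD' : 0 < D') (hρ : 0 < ρ) (hNp : 0 < N) (hΓ : 0 ≤ Γ)
    (H1 : 8 * N' * Γ * (D + 1) ≤ N * D' * ρ) (H2 : 4 * N' ≤ N)
    (H3 : (D + 1) * η ≤ N * ρ / 4) (H4 : 4 * g * U.card ≤ N * ρ) (hg : 0 ≤ g) :
    ∃ Sat : Finset X, (∀ x ∈ U, x ∉ Sat → ((L'.filter fun y => x ∈ R' y).card : ℝ) < D') ∧
    ∃ v ∈ W, ∃ M : Finset Y, M ⊆ L ∧ Disjoint L' M ∧ g ≤ M.card ∧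
      (∀ y ∈ M, v ∈ R y ∧ v ∈ S y i ∧ ∀ j, ((R y ∩ S y j ∩ Sat).card : ℝ) ≤ ρ / 2) := by
  classical
  set Sat := U.filter fun x => D' ≤ ((L'.filter fun y => x ∈ R' y).card : ℝ) with hSat
  refine ⟨Sat, fun x hx hxs => ?_, ?_⟩
  · by_contra hc
    exact hxs (Finset.mem_filter.2 ⟨hx, not_lt.1 hc⟩)
  have hN'0 : 0 ≤ N' := le_trans (by positivity) hN'
  have hSatcard : D' * Sat.card ≤ N' * Γ := by
    have h1 : D' * Sat.card ≤ ∑ y ∈ L', ((R' y ∩ Sat).card : ℝ) := by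
      rw [sum_inter_card]
      calc D' * (Sat.card : ℝ) = ∑ x ∈ Sat, D' := by simp [mul_comm]
        _ ≤ _ := Finset.sum_le_sum fun x hx => (Finset.mem_filter.1 hx).2
    have h2 : ∑ y ∈ L', ((R' y ∩ Sat).card : ℝ) ≤ ∑ y ∈ L', Γ :=
      Finset.sum_le_sum fun y hy => le_trans
        (by exact_mod_cast Finset.card_le_card Finset.inter_subset_left) (h'.cardR y hy)
    have h3 : ∑ y ∈ L', Γ = L'.card * Γ := by simp
    have h4 : (L'.card : ℝ) * Γ ≤ N' * Γ := mul_le_mul_of_nonneg_right hN' hΓ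
    linarith
  -- `dead` blocks have a part more than half of whose guaranteed size is saturated
  set dead := L.filter fun y => ∃ j, ρ / 2 < ((R y ∩ S y j ∩ Sat).card : ℝ) with hdead
  have hdeadcard : 4 * (dead.card : ℝ) ≤ N := by
    have h1 : (dead.card : ℝ) * (ρ / 2) ≤ (D + 1) * Sat.card := by
      calc (dead.card : ℝ) * (ρ / 2) = ∑ y ∈ dead, ρ / 2 := by simp
        _ ≤ ∑ y ∈ dead, ((R y ∩ Sat).card : ℝ) := by
            refine Finset.sum_le_sum fun y hy => ?_
            obtain ⟨j, hj⟩ := (Finset.mem_filter.1 hy).2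
            refine hj.le.trans ?_
            exact_mod_cast Finset.card_le_card
              (Finset.inter_subset_inter_right Finset.inter_subset_left)
        _ ≤ ∑ y ∈ L, ((R y ∩ Sat).card : ℝ) :=
            Finset.sum_le_sum_of_subset_of_nonneg (Finset.filter_subset _ _)
              fun _ _ _ => by positivity
        _ ≤ _ := sum_inter_le _ _ _ _ h.deg
    have h2 : (dead.card : ℝ) * (ρ / 2) * D' ≤ (D + 1) * (N' * Γ) := by
      calc (dead.card : ℝ) * (ρ / 2) * D' ≤ (D + 1) * Sat.card * D' :=
            mul_le_mul_of_nonneg_right h1 hD'.le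
        _ = (D + 1) * (D' * Sat.card) := by ring
        _ ≤ _ := mul_le_mul_of_nonneg_left hSatcard (by linarith)
    have h3 : (4 * (dead.card : ℝ)) * (D' * ρ) ≤ N * (D' * ρ) := by nlinarith
    exact le_of_mul_le_mul_right h3 (by positivity)
  set A := (L \ L') \ dead with hA
  have hAcard : N / 2 ≤ (A.card : ℝ) := by
    have h1 : L.card ≤ A.card + L'.card + dead.card := by
      have : L ⊆ A ∪ L' ∪ dead := by
        intro y hy
        simp only [hA, Finset.mem_union, Finset.mem_sdiff]
        tauto
      calc L.card ≤ (A ∪ L' ∪ dead).card := Finset.card_le_card this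
        _ ≤ (A ∪ L').card + dead.card := Finset.card_union_le _ _
        _ ≤ _ := by gcongr; exact Finset.card_union_le _ _
    have h2 : (L.card : ℝ) ≤ A.card + L'.card + dead.card := by exact_mod_cast h1
    linarith
  have hAL : A ⊆ L := Finset.sdiff_subset.trans Finset.sdiff_subset
  -- incidences between the surviving blocks and the surviving vertices
  have hinc : N * ρ / 4 ≤ ∑ y ∈ A, ((R y ∩ S y i ∩ W).card : ℝ) := by
    have h1 : N / 2 * ρ ≤ ∑ y ∈ A, ((R y ∩ S y i).card : ℝ) := by
      calc N / 2 * ρ ≤ A.card * ρ := mul_le_mul_of_nonneg_right hAcard hρ.le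
        _ = ∑ y ∈ A, ρ := by simp
        _ ≤ _ := Finset.sum_le_sum fun y hy => h.big y (hAL hy) i
    have h2 : ∑ y ∈ A, ((R y ∩ S y i).card : ℝ) ≤
        ∑ y ∈ A, ((R y ∩ S y i ∩ W).card : ℝ) + ∑ y ∈ A, ((R y ∩ (U \ W)).card : ℝ) := by
      rw [← Finset.sum_add_distrib]
      refine Finset.sum_le_sum fun y hy => ?_
      have : R y ∩ S y i ⊆ (R y ∩ S y i ∩ W) ∪ (R y ∩ (U \ W)) := by
        intro x hx
        have := h.subU y (hAL hy) (Finset.mem_inter.1 hx).1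
        simp only [Finset.mem_union, Finset.mem_inter, Finset.mem_sdiff] at hx ⊢
        tauto
      exact_mod_cast (Finset.card_le_card this).trans (Finset.card_union_le _ _)
    have h3 : ∑ y ∈ A, ((R y ∩ (U \ W)).card : ℝ) ≤ (D + 1) * η := by
      calc _ ≤ ∑ y ∈ L, ((R y ∩ (U \ W)).card : ℝ) :=
            Finset.sum_le_sum_of_subset_of_nonneg hAL fun _ _ _ => by positivity
        _ ≤ (D + 1) * (U \ W).card := sum_inter_le _ _ _ _ h.deg
        _ ≤ _ := mul_le_mul_of_nonneg_left hη (by linarith)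
    linarith
  rw [sum_inter_card] at hinc
  have hWne : W.Nonempty := by
    by_contra hc
    rw [Finset.not_nonempty_iff_eq_empty] at hc
    rw [hc] at hinc
    simp only [Finset.sum_empty] at hinc
    have : 0 < N * ρ := by positivity
    linarith
  obtain ⟨v, hv, hgv⟩ : ∃ v ∈ W, g ≤ ((A.filter fun y => v ∈ R y ∩ S y i).card : ℝ) := by
    refine Finset.exists_le_of_sum_le hWne (le_trans ?_ hinc)
    have h1 : (W.card : ℝ) ≤ U.card := by exact_mod_cast Finset.card_le_card hW
    have h2 := mul_le_mul_of_nonneg_left h1 hg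
    simp only [Finset.sum_const, nsmul_eq_mul]
    linarith
  refine ⟨v, hv, A.filter fun y => v ∈ R y ∩ S y i, (Finset.filter_subset _ _).trans hAL, ?_,
    hgv, ?_⟩
  · rw [Finset.disjoint_left]
    intro y hy hy'
    have := (Finset.mem_filter.1 hy').1
    simp only [hA, Finset.mem_sdiff] at this
    exact this.1.2 hy
  · intro y hy
    obtain ⟨hyA, hvy⟩ := Finset.mem_filter.1 hy
    refine ⟨(Finset.mem_inter.1 hvy).1, (Finset.mem_inter.1 hvy).2, fun j => ?_⟩
    by_contra hc
    have : y ∈ dead := Finset.mem_filter.2 ⟨hAL hyA, j, not_le.1 hc⟩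
    exact (Finset.mem_sdiff.1 hyA).2 this

/-- Moving the blocks `M` to the next level after a yes on `v`. Saturated vertices and `v` itself
are no longer usable in the moved blocks; any other vertex shares at most one block with `v`, so its
degree grows by at most one and stays below `D' + 1`. -/
theorem PartialFill.extend {X Y ι : Type*} [DecidableEq X] [DecidableEq Y] [DecidableEq ι]
    {S : Y → ι → Finset X} {U : Finset X} {Γ : ℝ} {t : ι → ℕ} {T : Finset X}
    {D ρ D' : ℝ} {L L' : Finset Y} {R R' : Y → Finset X} {ρ' : ℝ} {i : ι}
    {Sat : Finset X} {v : X} {M : Finset Y}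
    (hlin : ∀ x x' y y', x ≠ x' → (∃ i, x ∈ S y i) → (∃ i, x' ∈ S y i) →
      (∃ i, x ∈ S y' i) → (∃ i, x' ∈ S y' i) → y = y')
    (h : PartialFill S U Γ t T D ρ L R)
    (h' : PartialFill S U Γ (Function.update t i (t i + 1)) T D' ρ' L' R')
    (hSat : ∀ x ∈ U, x ∉ Sat → ((L'.filter fun y => x ∈ R' y).card : ℝ) < D')
    (hv : v ∉ T) (hML : M ⊆ L) (hM : Disjoint L' M)
    (hMv : ∀ y ∈ M, v ∈ R y ∧ v ∈ S y i ∧ ∀ j, ((R y ∩ S y j ∩ Sat).card : ℝ) ≤ ρ / 2)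
    (hρ' : ρ' ≤ ρ / 2 - 1) :
    PartialFill S U Γ (Function.update t i (t i + 1)) (insert v T) D' ρ' (L' ∪ M)
      (fun y => if y ∈ L' then R' y else (R y \ Sat).erase v) := by
  have hnot : ∀ y ∈ M, y ∉ L' := fun y hy hy' => Finset.disjoint_left.1 hM hy' hy
  refine ⟨?_, ?_, ?_, ?_, ?_, ?_⟩
  · intro y hy j
    rcases Finset.mem_union.1 hy with hy | hy
    · exact (h'.fill y hy j).trans (Finset.card_le_card
        (Finset.inter_subset_inter_right (Finset.subset_insert _ _)))
    · have h1 := h.fill y (hML hy)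
      by_cases hj : j = i
      · subst hj
        rw [Function.update_self, Finset.insert_inter_of_mem (hMv y hy).2.1,
          Finset.card_insert_of_notMem (fun hc => hv (Finset.mem_inter.1 hc).1)]
        exact Nat.succ_le_succ (h1 j)
      · rw [Function.update_of_ne hj]
        exact (h1 j).trans (Finset.card_le_card
          (Finset.inter_subset_inter_right (Finset.subset_insert _ _)))
  · intro y hy x hx
    rcases Finset.mem_union.1 hy with hy | hy
    · rw [if_pos hy] at hx
      exact h'.sub y hy x hx
    · rw [if_neg (hnot y hy)] at hx
      exact h.sub y (hML hy) x (Finset.mem_sdiff.1 (Finset.mem_of_mem_erase hx)).1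
  · intro y hy
    rcases Finset.mem_union.1 hy with hy | hy
    · rw [if_pos hy]
      exact h'.subU y hy
    · rw [if_neg (hnot y hy)]
      exact ((Finset.erase_subset _ _).trans Finset.sdiff_subset).trans (h.subU y (hML hy))
  · intro y hy
    rcases Finset.mem_union.1 hy with hy | hy
    · rw [if_pos hy]
      exact h'.cardR y hy
    · rw [if_neg (hnot y hy)]
      refine le_trans ?_ (h.cardR y (hML hy))
      exact_mod_cast Finset.card_le_card ((Finset.erase_subset _ _).trans Finset.sdiff_subset)
  · intro y hy j
    rcases Finset.mem_union.1 hy with hy | hy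
    · rw [if_pos hy]
      exact h'.big y hy j
    · rw [if_neg (hnot y hy)]
      have h1 := h.big y (hML hy) j
      have h2 := (hMv y hy).2.2 j
      have h3 : R y ∩ S y j ⊆ insert v (((R y \ Sat).erase v ∩ S y j) ∪ (R y ∩ S y j ∩ Sat)) := by
        intro x hx
        simp only [Finset.mem_insert, Finset.mem_union, Finset.mem_inter, Finset.mem_erase,
          Finset.mem_sdiff] at hx ⊢
        tauto
      have h4 : (R y ∩ S y j).card ≤
          ((R y \ Sat).erase v ∩ S y j).card + (R y ∩ S y j ∩ Sat).card + 1 :=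
        ((Finset.card_le_card h3).trans (Finset.card_insert_le _ _)).trans
          (Nat.succ_le_succ (Finset.card_union_le _ _))
      have h5 : ((R y ∩ S y j).card : ℝ) ≤
          ((R y \ Sat).erase v ∩ S y j).card + (R y ∩ S y j ∩ Sat).card + 1 := by
        exact_mod_cast h4
      linarith
  · intro x
    set M' := M.filter fun y => x ∈ (R y \ Sat).erase v with hM'
    have hsub : ((L' ∪ M).filter fun y => x ∈ if y ∈ L' then R' y else (R y \ Sat).erase v) ⊆
        (L'.filter fun y => x ∈ R' y) ∪ M' := by
      intro y hy
      obtain ⟨hy, hx⟩ := Finset.mem_filter.1 hy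
      by_cases hyL : y ∈ L'
      · rw [if_pos hyL] at hx
        exact Finset.mem_union_left _ (Finset.mem_filter.2 ⟨hyL, hx⟩)
      · rw [if_neg hyL] at hx
        refine Finset.mem_union_right _ (Finset.mem_filter.2 ⟨?_, hx⟩)
        exact (Finset.mem_union.1 hy).resolve_left hyL
    have hcard : (((L' ∪ M).filter fun y =>
        x ∈ if y ∈ L' then R' y else (R y \ Sat).erase v).card : ℝ) ≤
        (L'.filter fun y => x ∈ R' y).card + M'.card := by
      exact_mod_cast (Finset.card_le_card hsub).trans (Finset.card_union_le _ _)
    refine hcard.trans ?_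
    rcases M'.eq_empty_or_nonempty with he | ⟨y₀, hy₀⟩
    · rw [he]
      simpa using h'.deg x
    · obtain ⟨hy₀M, hx₀⟩ := Finset.mem_filter.1 hy₀
      simp only [Finset.mem_erase, Finset.mem_sdiff] at hx₀
      have hlt := hSat x (h.subU y₀ (hML hy₀M) hx₀.2.1) hx₀.2.2
      -- two blocks of `M` share `v`, hence no other vertex
      have hone : M'.card ≤ 1 := by
        rw [Finset.card_le_one]
        intro a ha b hb
        obtain ⟨haM, hxa⟩ := Finset.mem_filter.1 ha
        obtain ⟨hbM, hxb⟩ := Finset.mem_filter.1 hb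
        simp only [Finset.mem_erase, Finset.mem_sdiff] at hxa hxb
        exact hlin x v a b hxa.1 (h.sub a (hML haM) x hxa.2.1) ⟨i, (hMv a haM).2.1⟩
          (h.sub b (hML hbM) x hxb.2.1) ⟨i, (hMv b hbM).2.1⟩
      have : (M'.card : ℝ) ≤ 1 := by exact_mod_cast hone
      linarith

/-! ### The decision tree -/

/-- The sets satisfying `P` are covered by at most `m` containers, each of size at most `K`. -/
def Covered {X : Type*} (P : Finset X → Prop) (m K : ℕ) : Prop :=
  ∃ 𝒞 : Finset (Finset X), 𝒞.card ≤ m ∧ (∀ C ∈ 𝒞, C.card ≤ K) ∧ ∀ A, P A → ∃ C ∈ 𝒞, A ⊆ C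

theorem Covered.mono {X : Type*} {P : Finset X → Prop} {m m' K K' : ℕ}
    (h : Covered P m K) (hm : m ≤ m') (hK : K ≤ K') : Covered P m' K' := by
  obtain ⟨𝒞, h1, h2, h3⟩ := h
  exact ⟨𝒞, h1.trans hm, fun C hC => (h2 C hC).trans hK, h3⟩

theorem PartialFill.mono {X Y ι : Type*} [DecidableEq X]
    {S : Y → ι → Finset X} {U : Finset X} {Γ : ℝ} {t : ι → ℕ} {T T' : Finset X}
    {D ρ : ℝ} {L : Finset Y} {R : Y → Finset X}
    (h : PartialFill S U Γ t T D ρ L R) (hT : T ⊆ T') : PartialFill S U Γ t T' D ρ L R :=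
  { h with
    fill := fun y hy i => (h.fill y hy i).trans
      (Finset.card_le_card (Finset.inter_subset_inter_right hT)) }

/-- The decision tree within one level. Here `T` consists of the vertices answered yes, `W` of those
not yet asked about, and `c` more yeses are enough to complete the next level, after which `hnext`
takes over. A branch stops as soon as `W` has at most `κ₀` elements, with container `W ∪ T`. -/
theorem covered_of_level {X Y ι : Type*} [DecidableEq X] [DecidableEq Y] [DecidableEq ι]
    {S : Y → ι → Finset X} {U : Finset X} {Γ : ℝ} {t : ι → ℕ}
    {D ρ D' ρ' N N' η g : ℝ} {L : Finset Y} {R : Y → Finset X} (i : ι)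
    (P : Finset X → Prop) (κ₀ e : ℕ)
    (hlin : ∀ x x' y y', x ≠ x' → (∃ i, x ∈ S y i) → (∃ i, x' ∈ S y i) →
      (∃ i, x ∈ S y' i) → (∃ i, x' ∈ S y' i) → y = y')
    (hN : N ≤ L.card) (hκ : (U.card : ℝ) - κ₀ ≤ η)
    (hD : 0 ≤ D) (hD' : 0 < D') (hρ : 0 < ρ) (hNp : 0 < N) (hΓ : 0 ≤ Γ)
    (H1 : 8 * N' * Γ * (D + 1) ≤ N * D' * ρ) (H2 : 4 * N' ≤ N)
    (H3 : (D + 1) * η ≤ N * ρ / 4) (H4 : 4 * g * U.card ≤ N * ρ) (hg : 0 ≤ g)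
    (hρ' : ρ' ≤ ρ / 2 - 1)
    (hnext : ∀ T W L R, W ⊆ U → Disjoint W T →
      PartialFill S U Γ (Function.update t i (t i + 1)) T D' ρ' L R → N' ≤ (L.card : ℝ) →
      Covered (fun A => P A ∧ T ⊆ A ∧ A ⊆ W ∪ T) ((W.card + 1) ^ e) (κ₀ + T.card + e)) :
    ∀ (n c : ℕ) (T W : Finset X) (L' : Finset Y) (R' : Y → Finset X), W.card = n → W ⊆ U →
      Disjoint W T → PartialFill S U Γ t T D ρ L R →
      PartialFill S U Γ (Function.update t i (t i + 1)) T D' ρ' L' R' →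
      N' ≤ L'.card + g * c →
      Covered (fun A => P A ∧ T ⊆ A ∧ A ⊆ W ∪ T) ((n + 1) ^ (c + e)) (κ₀ + T.card + c + e) := by
  intro n
  induction n with
  | zero =>
    intro c T W L' R' hWn hWU hWT h h' hc
    refine ⟨{W ∪ T}, by simp, ?_, fun A hA => ⟨_, Finset.mem_singleton_self _, hA.2.2⟩⟩
    intro C hC
    rw [Finset.mem_singleton.1 hC]
    have := Finset.card_union_le W T
    omega
  | succ n ih =>
    intro c T W L' R' hWn hWU hWT h h' hc
    by_cases hsmall : W.card ≤ κ₀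
    · refine ⟨{W ∪ T}, by simpa using Nat.one_le_pow _ _ (by omega), ?_,
        fun A hA => ⟨_, Finset.mem_singleton_self _, hA.2.2⟩⟩
      intro C hC
      rw [Finset.mem_singleton.1 hC]
      have := Finset.card_union_le W T
      omega
    by_cases hfull : N' ≤ (L'.card : ℝ)
    · refine (hnext T W L' R' hWU hWT h' hfull).mono ?_ (by omega)
      rw [hWn]
      exact Nat.pow_le_pow_right (by omega) (by omega)
    obtain ⟨c, rfl⟩ : ∃ c', c = c' + 1 := by
      refine Nat.exists_eq_succ_of_ne_zero ?_
      rintro rfl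
      simp at hc
      exact hfull hc
    have hηW : ((U \ W).card : ℝ) ≤ η := by
      rw [Finset.cast_card_sdiff hWU]
      have : (κ₀ : ℝ) ≤ W.card := by exact_mod_cast (not_le.1 hsmall).le
      linarith
    obtain ⟨Sat, hSat, v, hvW, M, hML, hM, hgM, hMv⟩ :=
      exists_rich_vertex i h h' hN (not_le.1 hfull).le hWU hηW hD hD' hρ hNp hΓ H1 H2 H3 H4 hg
    have hvT : v ∉ T := Finset.disjoint_left.1 hWT hvW
    have hW'n : (W.erase v).card = n := by rw [Finset.card_erase_of_mem hvW, hWn]; rfl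
    have hW'U : W.erase v ⊆ U := (Finset.erase_subset _ _).trans hWU
    have hW'T : Disjoint (W.erase v) T := hWT.mono_left (Finset.erase_subset _ _)
    -- the sets avoiding `v`
    obtain ⟨𝒞₀, h01, h02, h03⟩ := ih (c + 1) T (W.erase v) L' R' hW'n hW'U hW'T h h' hc
    -- the sets containing `v`
    obtain ⟨𝒞₁, h11, h12, h13⟩ := ih c (insert v T) (W.erase v) (L' ∪ M) _ hW'n hW'U
      (by rw [Finset.disjoint_insert_right]; exact ⟨Finset.notMem_erase _ _, hW'T⟩)
      (h.mono (Finset.subset_insert _ _)) (h.extend hlin h' hSat hvT hML hM hMv hρ') (by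
        rw [Finset.card_union_of_disjoint hM]
        push_cast at hc ⊢
        linarith)
    refine ⟨𝒞₀ ∪ 𝒞₁, ?_, ?_, ?_⟩
    · have h1 : (n + 1) ^ (c + 1 + e) + (n + 1) ^ (c + e) ≤ (n + 1 + 1) ^ (c + 1 + e) := by
        have h2 : (n + 1) ^ (c + e) ≤ (n + 1 + 1) ^ (c + e) := Nat.pow_le_pow_left (by omega) _
        have h3 : c + 1 + e = (c + e) + 1 := by ring
        rw [h3, pow_succ, pow_succ]
        nlinarith
      exact (Finset.card_union_le _ _).trans ((Nat.add_le_add h01 h11).trans h1)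
    · intro C hC
      rcases Finset.mem_union.1 hC with hC | hC
      · exact h02 C hC
      · have := h12 C hC
        rw [Finset.card_insert_of_notMem hvT] at this
        omega
    · rintro A ⟨hPA, hTA, hAW⟩
      by_cases hvA : v ∈ A
      · obtain ⟨C, hC, hAC⟩ := h13 A ⟨hPA, Finset.insert_subset hvA hTA, by
          intro x hx
          have := hAW hx
          simp only [Finset.mem_union, Finset.mem_erase, Finset.mem_insert] at this ⊢
          tauto⟩
        exact ⟨C, Finset.mem_union_right _ hC, hAC⟩
      · obtain ⟨C, hC, hAC⟩ := h03 A ⟨hPA, hTA, by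
          intro x hx
          have := hAW hx
          have hxv : x ≠ v := fun hc => hvA (hc ▸ hx)
          simp only [Finset.mem_union, Finset.mem_erase] at this ⊢
          tauto⟩
        exact ⟨C, Finset.mem_union_left _ hC, hAC⟩

/-- Chaining all levels: `d` levels remain, and each costs at most `β` yeses. When `d = 0` every
slot of some block is filled by `T ⊆ A`, so no admissible `A` is left. -/
theorem covered_of_partialFill {X Y ι : Type*} [DecidableEq X] [DecidableEq Y] [DecidableEq ι]
    [Fintype ι]
    {S : Y → ι → Finset X} {U : Finset X} {Γ : ℝ} (sz : ι → ℕ) (s : ℕ) (hs : ∑ i, sz i = s)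
    (D ρ N g : ℕ → ℝ) (η : ℝ) (κ₀ β : ℕ)
    (hlin : ∀ x x' y y', x ≠ x' → (∃ i, x ∈ S y i) → (∃ i, x' ∈ S y i) →
      (∃ i, x ∈ S y' i) → (∃ i, x' ∈ S y' i) → y = y')
    (hκ : (U.card : ℝ) - κ₀ ≤ η) (hΓ : 0 ≤ Γ)
    (hD : ∀ k, 0 < D k) (hρ : ∀ k, 0 < ρ k) (hN : ∀ k, 0 < N k) (hg : ∀ k, 0 ≤ g k)
    (H1 : ∀ k < s, 8 * N (k + 1) * Γ * (D k + 1) ≤ N k * D (k + 1) * ρ k)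
    (H2 : ∀ k < s, 4 * N (k + 1) ≤ N k)
    (H3 : ∀ k < s, (D k + 1) * η ≤ N k * ρ k / 4)
    (H4 : ∀ k < s, 4 * g k * U.card ≤ N k * ρ k)
    (H5 : ∀ k < s, ρ (k + 1) ≤ ρ k / 2 - 1)
    (H6 : ∀ k < s, N (k + 1) ≤ g k * β) :
    ∀ (d k : ℕ), k + d = s → ∀ (t : ι → ℕ), (∀ i, t i ≤ sz i) → ∑ i, t i = k →
      ∀ (T W : Finset X) (L : Finset Y) (R : Y → Finset X), W ⊆ U → Disjoint W T →
      PartialFill S U Γ t T (D k) (ρ k) L R → N k ≤ L.card →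
      Covered (fun A => (∀ y, ∃ i, (A ∩ S y i).card < sz i) ∧ T ⊆ A ∧ A ⊆ W ∪ T)
        ((W.card + 1) ^ (d * β)) (κ₀ + T.card + d * β) := by
  intro d
  induction d with
  | zero =>
    intro k hk t ht htk T W L R hWU hWT h hL
    refine ⟨∅, by simp, by simp, ?_⟩
    rintro A ⟨hA, hTA, -⟩
    exfalso
    have hLne : L.Nonempty := by
      rw [← Finset.card_pos]
      have := (hN k).trans_le hL
      exact_mod_cast this
    obtain ⟨y, hy⟩ := hLne
    obtain ⟨i, hi⟩ := hA y
    have hti : t i = sz i :=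
      (Finset.sum_eq_sum_iff_of_le fun i _ => ht i).1 (by omega) i (Finset.mem_univ i)
    have h1 := h.fill y hy i
    have h2 : (T ∩ S y i).card ≤ (A ∩ S y i).card :=
      Finset.card_le_card (Finset.inter_subset_inter_right hTA)
    omega
  | succ d ih =>
    intro k hk t ht htk T W L R hWU hWT h hL
    have hks : k < s := by omega
    obtain ⟨i, hi⟩ : ∃ i, t i < sz i := by
      by_contra! hc
      have := Finset.sum_le_sum fun i (_ : i ∈ Finset.univ) => hc i
      omega
    have key := covered_of_level (L := L) (R := R) (t := t) i
      (fun A => ∀ y, ∃ i, (A ∩ S y i).card < sz i) κ₀ (d * β)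
      hlin hL hκ (hD k).le (hD (k + 1)) (hρ k) (hN k) hΓ (H1 k hks) (H2 k hks) (H3 k hks)
      (H4 k hks) (hg k) (H5 k hks) (fun T' W' L' R' hW'U hW'T' hf hL' =>
        ih (k + 1) (by omega) (Function.update t i (t i + 1)) (by
            intro j
            by_cases hj : j = i
            · subst hj; rw [Function.update_self]; exact hi
            · rw [Function.update_of_ne hj]; exact ht j) (by
            rw [← htk, Finset.sum_update_of_mem (Finset.mem_univ i),
              ← Finset.add_sum_erase _ _ (Finset.mem_univ i), Finset.sdiff_singleton_eq_erase]
            ring) T' W' L' R' hW'U hW'T' hf hL')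
      W.card β T W ∅ (fun _ => ∅) rfl hWU hWT h
      ⟨by simp, by simp, by simp, by simp, by simp, by intro x; simpa using by linarith [hD (k+1)]⟩
      (by simpa using H6 k hks)
    refine key.mono (le_of_eq ?_) (le_of_eq ?_)
    · congr 1; ring
    · ring

/-! ### One round -/

/-- The factor by which `N_k / D_k` drops from one level to the next. -/
def kap (r s : ℕ) : ℝ := 160 * r ^ 2 * 4 ^ s

/-- Up to a factor `2`, the constant `C` for which one round excludes a proportion `1 / (C log q)` of
the vertices. -/
def shrinkC (r s : ℕ) : ℝ := 640 * r * (4 * kap r s) ^ s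

/-- One round with the parameters `N_k = N_0 (θ / κ)^k`, `D_k = q θ^k`, `ρ_k = γ / (10 r 4^k)` and
`g_k = N_k ρ_k / (4 |U|)`. The variable `l` stands for `log₂ q`. -/
theorem covered_shrink {X Y : Type*} [DecidableEq X] [DecidableEq Y] {r : ℕ} (hr : 1 ≤ r)
    (sz : Fin r → ℕ) (s : ℕ) (hs : ∑ i, sz i = s)
    (S : Y → Fin r → Finset X) (U : Finset X) (L : Finset Y) (q θ γ l : ℝ)
    (hlin : ∀ x x' y y', x ≠ x' → (∃ i, x ∈ S y i) → (∃ i, x' ∈ S y i) →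
      (∃ i, x ∈ S y' i) → (∃ i, x' ∈ S y' i) → y = y')
    (hSU : ∀ y i, S y i ⊆ U)
    (hdeg : ∀ x, ((L.filter fun y => ∃ i, x ∈ S y i).card : ℝ) ≤ q + 1)
    (hlow : ∀ y ∈ L, ∀ i, γ / (10 * r) ≤ ((S y i).card : ℝ))
    (hup : ∀ y ∈ L, ∀ i, ((S y i).card : ℝ) ≤ γ)
    (hl : 0 < l) (hq : 0 < q) (hθ : 0 < θ) (hθ1 : θ ≤ 1) (hθs : ∀ k < s, 1 ≤ q * θ ^ k)
    (hU : 40 * r * 4 ^ s * q ^ 2 ≤ (U.card : ℝ)) (hγ : (U.card : ℝ) / q ^ 2 ≤ γ)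
    (hL : (U.card : ℝ) * q / (8 * γ * l) ≤ L.card)
    (κ₀ β : ℕ) (hβ : θ * q ^ 2 ≤ β) (hκ : (U.card : ℝ) - κ₀ ≤ U.card / (shrinkC r s * l)) :
    Covered (fun A => (∀ y, ∃ i, (A ∩ S y i).card < sz i) ∧ A ⊆ U)
      ((U.card + 1) ^ (s * β)) (κ₀ + s * β) := by
  have hr0 : (0 : ℝ) < r := by exact_mod_cast hr
  have hr1 : (1 : ℝ) ≤ r := by exact_mod_cast hr
  have hU0 : (0 : ℝ) < U.card := lt_of_lt_of_le (by positivity) hU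
  have hγ0 : 0 < γ := lt_of_lt_of_le (by positivity) hγ
  have h4 : ∀ k ≤ s, (4 : ℝ) ^ k ≤ 4 ^ s := fun k hk => pow_le_pow_right₀ (by norm_num) hk
  have h4' : ∀ k, (1 : ℝ) ≤ 4 ^ k := fun k => one_le_pow₀ (by norm_num)
  set κ := kap r s with hκdef
  have hκ1 : 160 ≤ κ := by
    have : 1 ≤ (r : ℝ) ^ 2 := one_le_pow₀ hr1
    have := h4' s
    rw [hκdef, kap]
    nlinarith
  have hκ0 : 0 < κ := by linarith
  have hγq : U.card ≤ γ * q ^ 2 := by rwa [div_le_iff₀ (by positivity)] at hγ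
  have hγbig : 40 * r * 4 ^ s ≤ γ := by
    have : 40 * r * 4 ^ s * q ^ 2 ≤ γ * q ^ 2 := hU.trans hγq
    exact le_of_mul_le_mul_right this (by positivity)
  set N : ℕ → ℝ := fun k => (U.card : ℝ) * q / (8 * γ * l) * (θ / κ) ^ k with hN
  set D : ℕ → ℝ := fun k => q * θ ^ k with hD
  set ρ : ℕ → ℝ := fun k => γ / (10 * r * 4 ^ k) with hρ
  set g : ℕ → ℝ := fun k => N k * ρ k / (4 * U.card) with hg
  have hNpos : ∀ k, 0 < N k := fun k => by simp only [hN]; positivity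
  have hDpos : ∀ k, 0 < D k := fun k => by simp only [hD]; positivity
  have hρpos : ∀ k, 0 < ρ k := fun k => by simp only [hρ]; positivity
  have hNsucc : ∀ k, N (k + 1) = N k * (θ / κ) := fun k => by simp only [hN]; ring
  have hDsucc : ∀ k, D (k + 1) = D k * θ := fun k => by simp only [hD]; ring
  have hD1 : ∀ k < s, D k + 1 ≤ 2 * D k := fun k hk => by
    have : 1 ≤ D k := hθs k hk
    linarith
  have key := covered_of_partialFill (S := S) (U := U) (Γ := r * γ) sz s hs D ρ N g
    (U.card / (shrinkC r s * l)) κ₀ β hlin hκ (by positivity) hDpos hρpos hNpos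
    (fun k => by have := hNpos k; have := hρpos k; simp only [hg]; positivity)
    ?_ ?_ ?_ ?_ ?_ ?_ s 0 (by simp) (fun _ => 0) (by simp) (by simp) ∅ U L
    (fun y => Finset.univ.biUnion (S y)) (subset_refl _) (by simp) ?_ (by simpa [hN] using hL)
  · obtain ⟨𝒞, h1, h2, h3⟩ := key
    exact ⟨𝒞, h1, fun C hC => by simpa using h2 C hC,
      fun A hA => h3 A ⟨hA.1, by simp, by simpa using hA.2⟩⟩
  · intro k hk
    rw [hNsucc, hDsucc]
    have e1 : 160 * r ^ 2 * 4 ^ k ≤ κ := by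
      rw [hκdef, kap]
      exact mul_le_mul_of_nonneg_left (h4 k hk.le) (by positivity)
    have e2 : 16 * (r * γ) ≤ κ * ρ k := by
      simp only [hρ]
      rw [mul_div_assoc', le_div_iff₀ (by positivity)]
      calc _ = 160 * r ^ 2 * 4 ^ k * γ := by ring
        _ ≤ _ := by gcongr
    calc 8 * (N k * (θ / κ)) * (r * γ) * (D k + 1)
        ≤ 8 * (N k * (θ / κ)) * (r * γ) * (2 * D k) := by
          have := hNpos k
          gcongr
          exact hD1 k hk
      _ = N k * D k * θ / κ * (16 * (r * γ)) := by ring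
      _ ≤ N k * D k * θ / κ * (κ * ρ k) := by
          have := hNpos k
          have := hDpos k
          gcongr
      _ = N k * (D k * θ) * ρ k := by field_simp
  · intro k hk
    rw [hNsucc]
    have : θ / κ ≤ 1 / 4 := by
      rw [div_le_iff₀ hκ0]; linarith
    nlinarith [hNpos k]
  · intro k hk
    have e0 : (4 * κ) ^ k ≤ (4 * κ) ^ s := pow_le_pow_right₀ (by linarith) hk.le
    have e1 : N k * ρ k / 4 = q * θ ^ k * (U.card / (320 * r * (4 * κ) ^ k * l)) := by
      simp only [hN, hρ, div_pow, mul_pow]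
      field_simp
      ring
    rw [e1]
    have e2 : 0 ≤ (U.card : ℝ) / (shrinkC r s * l) := by
      rw [shrinkC]; positivity
    calc (D k + 1) * (U.card / (shrinkC r s * l)) ≤ (2 * D k) * (U.card / (shrinkC r s * l)) := by
          gcongr
          exact hD1 k hk
      _ = q * θ ^ k * (U.card / (320 * r * (4 * κ) ^ s * l)) := by
          simp only [hD, shrinkC, ← hκdef]
          field_simp
          ring
      _ ≤ _ := by gcongr
  · intro k hk
    simp only [hg]
    rw [le_iff_eq_or_lt]; left
    field_simp
  · intro k hk
    have e1 : 4 ≤ ρ k := by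
      simp only [hρ]
      rw [le_div_iff₀ (by positivity)]
      calc (4 : ℝ) * (10 * r * 4 ^ k) = 40 * r * 4 ^ k := by ring
        _ ≤ 40 * r * 4 ^ s := mul_le_mul_of_nonneg_left (h4 k hk.le) (by positivity)
        _ ≤ γ := hγbig
    have e2 : ρ (k + 1) = ρ k / 4 := by
      simp only [hρ]; field_simp; ring
    rw [e2]; linarith
  · intro k hk
    rw [hNsucc]
    simp only [hg]
    have e0 : 40 * r * 4 ^ k ≤ κ := by
      have h2 : (r : ℝ) ≤ r ^ 2 := le_self_pow₀ hr1 (by norm_num)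
      calc 40 * r * 4 ^ k ≤ 40 * r * (4 : ℝ) ^ s :=
            mul_le_mul_of_nonneg_left (h4 k hk.le) (by positivity)
        _ ≤ 160 * r ^ 2 * 4 ^ s := mul_le_mul_of_nonneg_right (by linarith) (by positivity)
    have e1 : θ / κ ≤ ρ k / (4 * U.card) * β := by
      simp only [hρ]
      rw [div_div, div_mul_eq_mul_div, div_le_div_iff₀ hκ0 (by positivity)]
      calc θ * (10 * r * 4 ^ k * (4 * U.card)) = θ * U.card * (40 * r * 4 ^ k) := by ring
        _ ≤ θ * (γ * q ^ 2) * κ := by gcongr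
        _ = γ * (θ * q ^ 2) * κ := by ring
        _ ≤ γ * β * κ := by gcongr
    calc N k * (θ / κ) ≤ N k * (ρ k / (4 * U.card) * β) := by
          have := hNpos k
          gcongr
      _ = _ := by ring
  · refine ⟨by simp, ?_, ?_, ?_, ?_, ?_⟩
    · intro y _ x hx
      simpa using hx
    · intro y _
      exact Finset.biUnion_subset.2 fun i _ => hSU y i
    · intro y hy
      calc ((Finset.univ.biUnion (S y)).card : ℝ) ≤ ∑ i, ((S y i).card : ℝ) := by
            exact_mod_cast Finset.card_biUnion_le
        _ ≤ ∑ i : Fin r, γ := Finset.sum_le_sum fun i _ => hup y hy i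
        _ = r * γ := by simp
    · intro y hy i
      rw [Finset.inter_eq_right.2 (Finset.subset_biUnion_of_mem (S y) (Finset.mem_univ i))]
      simpa [hρ] using hlow y hy i
    · intro x
      simpa [hD] using hdeg x

/-! ### Iterating and counting -/

theorem covered_iterate {X : Type*} [DecidableEq X] (P : Finset X → Prop) (δ B : ℝ) (m : ℕ)
    (hδ1 : δ ≤ 1) (hm : 1 ≤ m)
    (step : ∀ U : Finset X, B ≤ U.card → ∃ 𝒞 : Finset (Finset X), 𝒞.card ≤ m ∧
      (∀ C ∈ 𝒞, (C.card : ℝ) ≤ (1 - δ) * U.card) ∧ ∀ A, P A → A ⊆ U → ∃ C ∈ 𝒞, A ⊆ C)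
    (U : Finset X) (J : ℕ) :
    ∃ 𝒞 : Finset (Finset X), 𝒞.card ≤ m ^ J ∧
      (∀ C ∈ 𝒞, (C.card : ℝ) ≤ max B ((1 - δ) ^ J * U.card)) ∧
      ∀ A, P A → A ⊆ U → ∃ C ∈ 𝒞, A ⊆ C := by
  classical
  have step' : ∀ U : Finset X, ∃ 𝒞 : Finset (Finset X), 𝒞.card ≤ m ∧
      (∀ C ∈ 𝒞, (C.card : ℝ) ≤ max B ((1 - δ) * U.card)) ∧
      ∀ A, P A → A ⊆ U → ∃ C ∈ 𝒞, A ⊆ C := by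
    intro U
    by_cases hU : B ≤ U.card
    · obtain ⟨𝒞, h1, h2, h3⟩ := step U hU
      exact ⟨𝒞, h1, fun C hC => (h2 C hC).trans (le_max_right _ _), h3⟩
    · refine ⟨{U}, by simpa using hm, ?_, fun A _ hA => ⟨U, by simp, hA⟩⟩
      intro C hC
      rw [Finset.mem_singleton.1 hC]
      exact (not_le.1 hU).le.trans (le_max_left _ _)
  choose f hf1 hf2 hf3 using step'
  induction J with
  | zero => exact ⟨{U}, by simp, by simp, fun A _ hA => ⟨U, by simp, hA⟩⟩
  | succ J ih =>
    obtain ⟨𝒞, h1, h2, h3⟩ := ih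
    have hB : B ≤ max B ((1 - δ) ^ (J + 1) * U.card) := le_max_left _ _
    refine ⟨𝒞.biUnion fun C => if (C.card : ℝ) ≤ B then {C} else f C, ?_, ?_, ?_⟩
    · rw [pow_succ]
      refine Finset.card_biUnion_le_card_mul _ _ _ ?_ |>.trans (Nat.mul_le_mul_right _ h1)
      intro C _
      split_ifs
      · simpa using hm
      · exact hf1 C
    · intro C hC
      obtain ⟨C', hC', hC⟩ := Finset.mem_biUnion.1 hC
      split_ifs at hC with hs
      · rw [Finset.mem_singleton.1 hC]
        exact hs.trans hB
      · refine (hf2 C' C hC).trans (max_le hB ?_)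
        have h4 := h2 C' hC'
        rcases le_max_iff.1 h4 with h5 | h5
        · exact absurd h5 hs
        · refine le_trans ?_ (le_max_right _ _)
          rw [pow_succ, mul_comm _ (1 - δ), mul_assoc]
          exact mul_le_mul_of_nonneg_left h5 (by linarith)
    · intro A hPA hA
      obtain ⟨C, hC, hAC⟩ := h3 A hPA hA
      by_cases hs : (C.card : ℝ) ≤ B
      · exact ⟨C, Finset.mem_biUnion.2 ⟨C, hC, by simp [hs]⟩, hAC⟩
      · obtain ⟨C', hC', hAC'⟩ := hf3 C A hPA hAC
        exact ⟨C', Finset.mem_biUnion.2 ⟨C, hC, by rwa [if_neg hs]⟩, hAC'⟩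

theorem count_of_containers {X : Type*} [Fintype X] [DecidableEq X] (P : Finset X → Prop)
    (𝒞 : Finset (Finset X)) (a : ℕ) (M V : ℝ) (h1 : (𝒞.card : ℝ) ≤ M) (hV : 0 ≤ V)
    (ha : 0 < a)
    (h2 : ∀ C ∈ 𝒞, (C.card : ℝ) ≤ V) (h3 : ∀ A, P A → ∃ C ∈ 𝒞, A ⊆ C) :
    (Set.ncard {A : Finset X | A.card = a ∧ P A} : ℝ) ≤ M * (V * Real.exp 1 / a) ^ a := by
  have ha' : (0 : ℝ) < a := by exact_mod_cast ha
  have hM : (0 : ℝ) ≤ M := le_trans (by positivity) h1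
  have hsub : {A : Finset X | A.card = a ∧ P A} ⊆
      ((𝒞.biUnion fun C => C.powersetCard a : Finset (Finset X)) : Set (Finset X)) := by
    rintro A ⟨hA, hPA⟩
    obtain ⟨C, hC, hAC⟩ := h3 A hPA
    simp only [Finset.coe_biUnion, Set.mem_iUnion, Finset.mem_coe, Finset.mem_powersetCard]
    exact ⟨C, hC, hAC, hA⟩
  have hc := Set.ncard_le_ncard hsub (Finset.finite_toSet _)
  rw [Set.ncard_coe_finset] at hc
  have hb : ∀ C ∈ 𝒞, ((C.powersetCard a).card : ℝ) ≤ (V * Real.exp 1 / a) ^ a := by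
    intro C hC
    rw [Finset.card_powersetCard]
    have e1 := Nat.choose_le_pow_div (α := ℝ) a C.card
    have e2 : ((C.card : ℝ)) ^ a ≤ V ^ a := pow_le_pow_left₀ (by positivity) (h2 C hC) a
    have e3 := Real.pow_div_factorial_le_exp (a : ℝ) ha'.le a
    have e4 : (Real.exp 1) ^ a = Real.exp a := by rw [← Real.exp_nat_mul]; simp
    have e5 : (1 : ℝ) / a.factorial ≤ Real.exp a / (a : ℝ) ^ a := by
      rw [div_le_iff₀ (by positivity)] at e3
      rw [div_le_div_iff₀ (by positivity) (by positivity)]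
      linarith
    calc ((C.card.choose a : ℕ) : ℝ) ≤ (C.card : ℝ) ^ a / a.factorial := e1
      _ ≤ V ^ a / a.factorial := by gcongr
      _ = V ^ a * (1 / a.factorial) := by ring
      _ ≤ V ^ a * (Real.exp a / (a : ℝ) ^ a) := by gcongr
      _ = _ := by rw [div_pow, mul_pow, e4]; ring
  calc (Set.ncard {A : Finset X | A.card = a ∧ P A} : ℝ)
      ≤ ((𝒞.biUnion fun C => C.powersetCard a).card : ℝ) := by exact_mod_cast hc
    _ ≤ ∑ C ∈ 𝒞, ((C.powersetCard a).card : ℝ) := by exact_mod_cast Finset.card_biUnion_le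
    _ ≤ ∑ C ∈ 𝒞, (V * Real.exp 1 / a) ^ a := Finset.sum_le_sum hb
    _ = 𝒞.card * (V * Real.exp 1 / a) ^ a := by simp
    _ ≤ _ := by gcongr

theorem exists_large (s C e K : ℝ) (he : 0 < e) :
    ∃ q₀ : ℕ, ∀ q : ℕ, q₀ ≤ q → 3 ≤ q ∧ s * C * Real.logb 2 q ≤ (q : ℝ) ^ e ∧
      K ≤ Real.logb 2 q ^ 3 := by
  have hlog2 : 0 < Real.log 2 := Real.log_pos (by norm_num)
  have h1 : Filter.Tendsto (fun x : ℝ => Real.log x) Filter.atTop Filter.atTop :=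
    Real.tendsto_log_atTop
  have h2 : ∀ᶠ x : ℝ in Filter.atTop, K ≤ Real.logb 2 x ^ 3 := by
    have : Filter.Tendsto (fun x : ℝ => Real.logb 2 x ^ 3) Filter.atTop Filter.atTop :=
      (Filter.tendsto_pow_atTop (by norm_num)).comp
        (Real.tendsto_logb_atTop (by norm_num))
    exact this.eventually_ge_atTop K
  have h3 : ∀ᶠ x : ℝ in Filter.atTop, s * C * Real.logb 2 x ≤ x ^ e := by
    have := ((isLittleO_log_rpow_atTop he).const_mul_left (s * C / Real.log 2)).bound
      (show (0 : ℝ) < 1 by norm_num)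
    filter_upwards [this, Filter.eventually_ge_atTop 0] with x hx hx0
    have h4 : ‖x ^ e‖ = x ^ e := Real.norm_of_nonneg (Real.rpow_nonneg hx0 _)
    rw [h4, one_mul] at hx
    refine le_trans (le_of_eq ?_) ((le_abs_self _).trans hx)
    rw [Real.logb]; ring
  have h5 := tendsto_natCast_atTop_atTop (R := ℝ) |>.eventually (h3.and h2)
  obtain ⟨q₀, hq₀⟩ := Filter.eventually_atTop.1 (h5.and (Filter.eventually_ge_atTop 3))
  exact ⟨q₀, fun q hq => ⟨(hq₀ q hq).2, (hq₀ q hq).1.1, (hq₀ q hq).1.2⟩⟩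

/-- The closing computation: `q ^ (4 s β J)` bounds the number of containers after `J` rounds, and is at
most `2 ^ (40 s C₁ a)`; the factor `l ^ 3` in `a` pays for all constants. -/
theorem final_bound (q θ l C₀ C₁ : ℝ) (s a β J : ℕ) (hq : 1 < q) (hl : l = Real.logb 2 q)
    (hl1 : 1 ≤ l) (hθ : 0 < θ) (hθq : 1 ≤ θ * q ^ 2) (hC₀ : 0 < C₀) (hC₁ : 1 ≤ C₁)
    (ha : θ * q ^ 2 * l ^ 3 ≤ a) (hβ : (β : ℝ) ≤ θ * q ^ 2 + 1)
    (hJ : (J : ℝ) ≤ 4 * C₁ * l ^ 2 + 1)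
    (hK : (2 : ℝ) ^ (40 * s * C₁) * Real.exp 1 * C₀ ≤ l ^ 3) :
    (q ^ (4 * s * β * J)) * (C₀ * q ^ 2 * Real.exp 1 / a) ^ a ≤ (1 / θ) ^ a := by
  have hl2 : 1 ≤ l ^ 2 := one_le_pow₀ hl1
  have hl3 : 0 < l ^ 3 := by positivity
  have ha0 : (0 : ℝ) < a := lt_of_lt_of_le (by positivity) ha
  have hq2 : q = (2 : ℝ) ^ l := by
    rw [hl, Real.rpow_logb (by norm_num) (by norm_num) (by linarith)]
  have e1 : q ^ (4 * s * β * J) ≤ ((2 : ℝ) ^ (40 * s * C₁)) ^ a := by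
    rw [hq2, ← Real.rpow_natCast, ← Real.rpow_natCast, ← Real.rpow_mul (by norm_num),
      ← Real.rpow_mul (by norm_num)]
    refine Real.rpow_le_rpow_of_exponent_le (by norm_num) ?_
    push_cast
    have hC₁l : 1 ≤ C₁ * l ^ 2 := by nlinarith
    calc l * (4 * s * β * J) ≤ l * (4 * s * (2 * (θ * q ^ 2)) * (5 * (C₁ * l ^ 2))) := by
          have : (β : ℝ) ≤ 2 * (θ * q ^ 2) := by linarith
          have : (J : ℝ) ≤ 5 * (C₁ * l ^ 2) := by linarith
          gcongr
      _ = 40 * s * C₁ * (θ * q ^ 2 * l ^ 3) := by ring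
      _ ≤ 40 * s * C₁ * a := by gcongr
  have h2K : (0 : ℝ) < (2 : ℝ) ^ (40 * s * C₁) := by positivity
  have e2 : (2 : ℝ) ^ (40 * s * C₁) * (C₀ * q ^ 2 * Real.exp 1 / a) ≤ 1 / θ := by
    rw [mul_div_assoc', div_le_div_iff₀ ha0 hθ]
    calc (2 : ℝ) ^ (40 * s * C₁) * (C₀ * q ^ 2 * Real.exp 1) * θ
        = ((2 : ℝ) ^ (40 * s * C₁) * Real.exp 1 * C₀) * (θ * q ^ 2) := by ring
      _ ≤ l ^ 3 * (θ * q ^ 2) := by gcongr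
      _ = θ * q ^ 2 * l ^ 3 := by ring
      _ ≤ 1 * a := by linarith
  calc q ^ (4 * s * β * J) * (C₀ * q ^ 2 * Real.exp 1 / a) ^ a
      ≤ ((2 : ℝ) ^ (40 * s * C₁)) ^ a * (C₀ * q ^ 2 * Real.exp 1 / a) ^ a := by gcongr
    _ = ((2 : ℝ) ^ (40 * s * C₁) * (C₀ * q ^ 2 * Real.exp 1 / a)) ^ a := by rw [mul_pow]
    _ ≤ _ := by gcongr

theorem one_le_shrinkC {r s : ℕ} (hr : 1 ≤ r) : 1 ≤ shrinkC r s := by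
  have hr1 : (1 : ℝ) ≤ r := by exact_mod_cast hr
  have h0 : (1 : ℝ) ≤ 4 ^ s := one_le_pow₀ (by norm_num)
  have h1 : (1 : ℝ) ≤ (r : ℝ) ^ 2 := one_le_pow₀ hr1
  have h2 : 1 ≤ kap r s := by rw [kap]; nlinarith
  have h3 : 1 ≤ (4 * kap r s) ^ s := one_le_pow₀ (by linarith)
  rw [shrinkC]; nlinarith

/-! ### Application to the graph `H` -/

/-- A block in which `A` meets every part in at least `s_i` vertices spans a copy of the complete
multipartite graph inside `H[A]`. -/
theorem exists_small_part {X Y : Type*} {r : ℕ} {sz : Fin r → ℕ} {E : X → Y → Prop}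
    {part : Y → X → Fin r} {H : SimpleGraph X}
    (hH : ∀ x₁ x₂, H.Adj x₁ x₂ ↔ ∃ (y : Y) (i j : Fin r), i ≠ j ∧
          (E x₁ y ∧ part y x₁ = i) ∧ (E x₂ y ∧ part y x₂ = j))
    {A : Finset X}
    (hA : ¬ ContainsCopy (SimpleGraph.completeMultipartiteGraph fun i => Fin (sz i))
              (H.induce (A : Set X))) (S : Y → Fin r → Finset X)
    (hS : ∀ y i x, x ∈ S y i → x ∈ A ∧ E x y ∧ part y x = i) (y : Y) :
    ∃ i, (S y i).card < sz i := by
  by_contra! hc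
  have emb : ∀ i, Nonempty (Fin (sz i) ↪ S y i) := fun i =>
    Function.Embedding.nonempty_of_card_le (by simpa using hc i)
  let φ : ∀ i, Fin (sz i) ↪ S y i := fun i => (emb i).some
  refine hA ⟨fun p => ⟨(φ p.1 p.2 : X), (hS y p.1 _ (φ p.1 p.2).2).1⟩, ?_, ?_⟩
  · rintro ⟨i, u⟩ ⟨j, v⟩ huv
    have huv : (φ i u : X) = φ j v := congrArg Subtype.val huv
    have h1 := (hS y i _ (φ i u).2).2.2
    have h2 := (hS y j _ (φ j v).2).2.2
    have hij : i = j := by rw [← h1, ← h2, huv]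
    subst hij
    rw [(φ i).injective (Subtype.ext huv)]
  · rintro ⟨i, u⟩ ⟨j, v⟩ huv
    have hij : i ≠ j := by simpa using huv
    exact (hH _ _).2 ⟨y, i, j, hij, (hS y i _ (φ i u).2).2, (hS y j _ (φ j v).2).2⟩

/-- One round for the graph `H`: the abstract blocks are `S y i = U ∩ S_i(y)`, and the at most `s β`
vertices answered yes are absorbed into half of the excluded proportion. -/
theorem exists_containers {X Y : Type*} [Fintype X] [Fintype Y] [DecidableEq X] {r : ℕ}
    (hr1 : 1 ≤ r) (sz : Fin r → ℕ) (s : ℕ) (hs : ∑ i, sz i = s) (hs1 : (1 : ℝ) ≤ s)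
    {E : X → Y → Prop} {part : Y → X → Fin r} {H : SimpleGraph X} (q : ℕ) (θ l : ℝ)
    (hdegx : ∀ x : X, Set.ncard {y : Y | E x y} = q + 1)
    (hC4 : ∀ x₁ x₂ y₁ y₂, x₁ ≠ x₂ → y₁ ≠ y₂ →
      E x₁ y₁ → E x₁ y₂ → E x₂ y₁ → E x₂ y₂ → False)
    (hH : ∀ x₁ x₂, H.Adj x₁ x₂ ↔ ∃ (y : Y) (i j : Fin r), i ≠ j ∧
      (E x₁ y ∧ part y x₁ = i) ∧ (E x₂ y ∧ part y x₂ = j))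
    (hl1 : 1 ≤ l) (hq0 : (0 : ℝ) < q) (hθ0 : 0 < θ) (hθ1 : θ ≤ 1)
    (hθs : ∀ k < s, 1 ≤ (q : ℝ) * θ ^ k) (hθq : 1 ≤ θ * (q : ℝ) ^ 2)
    (hsmall : 6 * s * shrinkC r s * l * θ ≤ 1)
    (β : ℕ) (hβ : θ * (q : ℝ) ^ 2 ≤ β) (hβ' : (β : ℝ) ≤ θ * (q : ℝ) ^ 2 + 1)
    (U : Finset X) (hU : 500 * r ^ 2 * 4 ^ s * (q : ℝ) ^ 2 ≤ U.card)
    (hgood : ∃ γ : ℝ, (U.card : ℝ) / (q : ℝ) ^ 2 ≤ γ ∧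
      (U.card : ℝ) * q / (8 * γ * l) ≤
        (Set.ncard {y : Y | ∀ i : Fin r,
          γ / (10 * r) ≤ (Set.ncard {x : X | x ∈ U ∧ E x y ∧ part y x = i} : ℝ) ∧
          (Set.ncard {x : X | x ∈ U ∧ E x y ∧ part y x = i} : ℝ) ≤ γ} : ℝ)) :
    ∃ 𝒞 : Finset (Finset X), 𝒞.card ≤ (Fintype.card X + 1) ^ (s * β) ∧
      (∀ C ∈ 𝒞, (C.card : ℝ) ≤ (1 - 1 / (2 * shrinkC r s * l)) * U.card) ∧
      ∀ A : Finset X, ¬ ContainsCopy (SimpleGraph.completeMultipartiteGraph fun i => Fin (sz i))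
        (H.induce (A : Set X)) → A ⊆ U → ∃ C ∈ 𝒞, A ⊆ C := by
  classical
  have hr1' : (1 : ℝ) ≤ r := by exact_mod_cast hr1
  have hr2 : (r : ℝ) ≤ r ^ 2 := le_self_pow₀ hr1' (by norm_num)
  have h4s : (1 : ℝ) ≤ 4 ^ s := one_le_pow₀ (by norm_num)
  set C₁ := shrinkC r s with hC₁def
  have hC₁ : 1 ≤ C₁ := one_le_shrinkC hr1
  have hC₁l : 1 ≤ C₁ * l := one_le_mul_of_one_le_of_one_le hC₁ hl1
  set δ : ℝ := 1 / (2 * C₁ * l) with hδdef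
  have hδ0 : 0 < δ := by positivity
  obtain ⟨γ, hγ, hcount⟩ := hgood
  set S : Y → Fin r → Finset X := fun y i => U.filter fun x => E x y ∧ part y x = i with hS
  have hSn : ∀ y i, Set.ncard {x : X | x ∈ U ∧ E x y ∧ part y x = i} = (S y i).card := by
    intro y i
    rw [← Set.ncard_coe_finset]
    congr 1
    ext x; simp [hS]
  simp only [hSn] at hcount
  set L : Finset Y := Finset.univ.filter fun y => ∀ i : Fin r,
    γ / (10 * r) ≤ ((S y i).card : ℝ) ∧ ((S y i).card : ℝ) ≤ γ with hLdef
  have hLn : Set.ncard {y : Y | ∀ i : Fin r,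
      γ / (10 * r) ≤ ((S y i).card : ℝ) ∧ ((S y i).card : ℝ) ≤ γ} = L.card := by
    rw [← Set.ncard_coe_finset]
    congr 1
    ext y; simp [hLdef]
  rw [hLn] at hcount
  have hSE : ∀ x y, (∃ i, x ∈ S y i) → E x y := by
    rintro x y ⟨i, hi⟩
    exact (Finset.mem_filter.1 hi).2.1
  set κ₀ := ⌈(U.card : ℝ) - U.card / (C₁ * l)⌉₊ with hκ₀
  have hκle : (U.card : ℝ) - U.card / (C₁ * l) ≤ κ₀ := Nat.le_ceil _
  have hdivle : (U.card : ℝ) / (C₁ * l) ≤ U.card :=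
    div_le_self (by positivity) hC₁l
  have hκlt : (κ₀ : ℝ) ≤ (U.card : ℝ) - U.card / (C₁ * l) + 1 :=
    (Nat.ceil_lt_add_one (by linarith)).le
  obtain ⟨𝒞, h1, h2, h3⟩ := covered_shrink hr1 sz s hs S U L q θ γ l
    (fun x x' y y' hne h1 h2 h3 h4 => by
      by_contra hyy
      exact hC4 x x' y y' hne hyy (hSE _ _ h1) (hSE _ _ h3) (hSE _ _ h2) (hSE _ _ h4))
    (fun y i => Finset.filter_subset _ _)
    (fun x => by
      have : (L.filter fun y => ∃ i, x ∈ S y i).card ≤ q + 1 := by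
        rw [← hdegx x, ← Set.ncard_coe_finset]
        refine Set.ncard_le_ncard (fun y hy => ?_) (Set.toFinite _)
        exact hSE x y (Finset.mem_filter.1 hy).2
      exact_mod_cast this)
    (fun y hy i => ((Finset.mem_filter.1 hy).2 i).1)
    (fun y hy i => ((Finset.mem_filter.1 hy).2 i).2)
    (by linarith) hq0 hθ0 hθ1 hθs
    (by
      refine le_trans ?_ hU
      gcongr
      · norm_num)
    hγ hcount κ₀ β hβ (by linarith)
  refine ⟨𝒞, h1.trans (Nat.pow_le_pow_left
    (Nat.succ_le_succ (Finset.card_le_univ U)) _), ?_, ?_⟩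
  · intro C hC
    have e1 : (C.card : ℝ) ≤ κ₀ + s * β := by exact_mod_cast h2 C hC
    have e2 : (s : ℝ) * β ≤ s * (θ * (q : ℝ) ^ 2 + 1) := by gcongr
    have e4 : 3 * s * (θ * (q : ℝ) ^ 2) ≤ U.card * δ := by
      have hq2U : (q : ℝ) ^ 2 ≤ U.card := by
        refine le_trans (le_mul_of_one_le_left (sq_nonneg _) ?_) hU
        nlinarith [hr2, hr1', h4s]
      have : 3 * s * θ ≤ δ := by
        rw [hδdef, le_div_iff₀ (by positivity)]
        linarith
      calc 3 * s * (θ * (q : ℝ) ^ 2) = (q : ℝ) ^ 2 * (3 * s * θ) := by ring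
        _ ≤ _ := by gcongr
    have e5 : (U.card : ℝ) / (C₁ * l) = 2 * (U.card * δ) := by
      rw [hδdef]; field_simp
    have e6 : (1 : ℝ) + s ≤ 2 * s * (θ * (q : ℝ) ^ 2) := by
      have := mul_le_mul_of_nonneg_left hθq (by linarith : (0 : ℝ) ≤ 2 * s)
      linarith
    have e7 : (1 - δ) * (U.card : ℝ) = U.card - U.card * δ := by ring
    linarith
  · intro A hPA hAU
    refine h3 A ⟨fun y => ?_, hAU⟩
    exact exists_small_part hH hPA (fun y i => A ∩ S y i) (fun y i x hx =>
      ⟨(Finset.mem_inter.1 hx).1, (Finset.mem_filter.1 (Finset.mem_inter.1 hx).2).2⟩) y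

theorem stmt15 (r : ℕ) (hr : 2 ≤ r) (sz : Fin r → ℕ) (hsz : ∀ i, 0 < sz i) :
    ∃ q₀ : ℕ, ∀ q : ℕ, Nat.Prime q → q₀ ≤ q →
      ∀ (X Y : Type) [Fintype X] [Fintype Y] [DecidableEq X],
        ∀ (E : X → Y → Prop) (part : Y → X → Fin r) (H : SimpleGraph X),
        -- sizes of the two sides of the bipartite graph `F`:
        Fintype.card X = q ^ 4 - q ^ 3 + q ^ 2 →
        Fintype.card Y = q ^ 3 + 1 →
        -- degrees in `F`:
        (∀ x : X, Set.ncard {y : Y | E x y} = q + 1) →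
        (∀ y : Y, Set.ncard {x : X | E x y} = q ^ 2) →
        -- `F` is `C₄`-free:
        (∀ x₁ x₂ y₁ y₂, x₁ ≠ x₂ → y₁ ≠ y₂ →
          E x₁ y₁ → E x₁ y₂ → E x₂ y₁ → E x₂ y₂ → False) →
        -- `F` contains no subdivision of `K₄` with branch vertices in `X`:
        (¬ ∃ (x : Fin 4 → X) (y : Fin 4 → Fin 4 → Y),
          Function.Injective x ∧
          (∀ i j, i < j → E (x i) (y i j) ∧ E (x j) (y i j)) ∧
          (∀ i j k l, i < j → k < l → (i, j) ≠ (k, l) → y i j ≠ y k l)) →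
        -- `H` is the graph on `X` obtained by embedding, for each `y`, a complete
        -- `r`-partite graph on the parts `S i y = {x | E x y ∧ part y x = i}`:
        (∀ x₁ x₂, H.Adj x₁ x₂ ↔ ∃ (y : Y) (i j : Fin r), i ≠ j ∧
          (E x₁ y ∧ part y x₁ = i) ∧ (E x₂ y ∧ part y x₂ = j)) →
        -- `H` is good:
        (∀ U : Finset X, 500 * r ^ 2 * q ^ 2 ≤ U.card →
          ∃ γ : ℝ, (U.card : ℝ) / (q : ℝ) ^ 2 ≤ γ ∧
            (U.card : ℝ) * q / (8 * γ * Real.logb 2 q) ≤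
              (Set.ncard {y : Y | ∀ i : Fin r,
                γ / (10 * r) ≤ (Set.ncard {x : X | x ∈ U ∧ E x y ∧ part y x = i} : ℝ) ∧
                (Set.ncard {x : X | x ∈ U ∧ E x y ∧ part y x = i} : ℝ) ≤ γ} : ℝ)) →
        (Set.ncard {A : Finset X |
            A.card = ⌈(q : ℝ) ^ (2 - 1 / ((∑ i, sz i : ℕ) - 1 : ℝ)) *
                Real.logb 2 (q : ℝ) ^ 3⌉₊ ∧
            ¬ ContainsCopy (SimpleGraph.completeMultipartiteGraph fun i => Fin (sz i))
              (H.induce (A : Set X))} : ℝ) ≤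
          ((q : ℝ) ^ ((1 : ℝ) / ((∑ i, sz i : ℕ) - 1 : ℝ))) ^
            ⌈(q : ℝ) ^ (2 - 1 / ((∑ i, sz i : ℕ) - 1 : ℝ)) * Real.logb 2 (q : ℝ) ^ 3⌉₊ := by
  classical
  obtain ⟨s, hs⟩ : ∃ s, ∑ i, sz i = s := ⟨_, rfl⟩
  rw [hs]
  -- in particular `s ≥ 2`, so the exponent `1 / (s - 1)` is not a division by zero
  have hrs : r ≤ s := by
    rw [← hs]
    calc r = ∑ i : Fin r, 1 := by simp
      _ ≤ _ := Finset.sum_le_sum fun i _ => hsz i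
  have hs2 : (2 : ℝ) ≤ s := by exact_mod_cast hr.trans hrs
  have hr1 : 1 ≤ r := by omega
  have hr1' : (1 : ℝ) ≤ r := by exact_mod_cast hr1
  set e : ℝ := 1 / ((s : ℝ) - 1) with he
  have he0 : 0 < e := by rw [he]; apply one_div_pos.2; linarith
  set C₁ := shrinkC r s with hC₁def
  have hC₁ : 1 ≤ C₁ := one_le_shrinkC hr1
  set C₀ : ℝ := 500 * r ^ 2 * 4 ^ s with hC₀def
  have h4s : (1 : ℝ) ≤ 4 ^ s := one_le_pow₀ (by norm_num)
  have hr2 : (r : ℝ) ≤ r ^ 2 := le_self_pow₀ hr1' (by norm_num)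
  have hC₀ : 1 ≤ C₀ := by rw [hC₀def]; nlinarith
  obtain ⟨q₀, hq₀⟩ := exists_large (6 * s) C₁ e
    ((2 : ℝ) ^ (40 * s * C₁) * Real.exp 1 * C₀) he0
  refine ⟨q₀, ?_⟩
  intro q _ hq X Y _ _ _ E part H hX _ hdegx _ hC4 _ hH hgood
  obtain ⟨hq3, hlarge, hK⟩ := hq₀ q hq
  have hq3' : (3 : ℝ) ≤ q := by exact_mod_cast hq3
  set l := Real.logb 2 (q : ℝ) with hldef
  have hl1 : 1 ≤ l := by
    rw [hldef, Real.le_logb_iff_rpow_le (by norm_num) (by linarith)]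
    norm_num; linarith
  set θ : ℝ := (q : ℝ) ^ (-e) with hθdef
  have hq0 : (0 : ℝ) < q := by linarith
  have hθ0 : 0 < θ := Real.rpow_pos_of_pos hq0 _
  have hθinv : (q : ℝ) ^ e = 1 / θ := by rw [hθdef, Real.rpow_neg hq0.le]; simp
  have hθ1 : θ ≤ 1 := Real.rpow_le_one_of_one_le_of_nonpos (by linarith) (by linarith)
  have hθpow : (q : ℝ) * θ ^ (s - 1) = 1 := by
    rw [hθdef, ← Real.rpow_natCast, ← Real.rpow_mul hq0.le, Nat.cast_sub (by omega)]
    have : -e * ((s : ℝ) - (1 : ℕ)) = -1 := by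
      rw [he]; push_cast; field_simp [show (s : ℝ) - 1 ≠ 0 by linarith]
    rw [this, Real.rpow_neg_one]
    field_simp
  have hθs : ∀ k < s, 1 ≤ (q : ℝ) * θ ^ k := by
    intro k hk
    rw [← hθpow]
    exact mul_le_mul_of_nonneg_left (pow_le_pow_of_le_one hθ0.le hθ1 (by omega)) hq0.le
  have hθq : 1 ≤ θ * (q : ℝ) ^ 2 := by
    have := hθs 1 (by omega)
    nlinarith
  have hexp : (q : ℝ) ^ (2 - e) = θ * (q : ℝ) ^ 2 := by
    rw [sub_eq_add_neg, Real.rpow_add hq0, hθdef, mul_comm]; norm_num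
  rw [hexp, hθinv]
  set a := ⌈θ * (q : ℝ) ^ 2 * l ^ 3⌉₊ with hadef
  have ha : θ * (q : ℝ) ^ 2 * l ^ 3 ≤ a := Nat.le_ceil _
  have ha0 : 0 < a := Nat.ceil_pos.2 (by positivity)
  set β := ⌈θ * (q : ℝ) ^ 2⌉₊ with hβdef
  have hβ : θ * (q : ℝ) ^ 2 ≤ β := Nat.le_ceil _
  have hβ' : (β : ℝ) ≤ θ * (q : ℝ) ^ 2 + 1 := (Nat.ceil_lt_add_one (by positivity)).le
  set δ : ℝ := 1 / (2 * C₁ * l) with hδdef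
  have hδ0 : 0 < δ := by positivity
  have hδ1 : δ ≤ 1 := by
    rw [hδdef, div_le_one (by positivity)]; nlinarith
  have hXq : Fintype.card X + 1 ≤ q ^ 4 := by
    rw [hX]
    have h1 : q ^ 3 ≤ q ^ 4 := Nat.pow_le_pow_right (by omega) (by omega)
    have h2 : q ^ 2 + 1 ≤ q ^ 3 := by nlinarith
    omega
  set P : Finset X → Prop := fun A =>
    ¬ ContainsCopy (SimpleGraph.completeMultipartiteGraph fun i => Fin (sz i))
      (H.induce (A : Set X)) with hP
  have step : ∀ U : Finset X, C₀ * (q : ℝ) ^ 2 ≤ U.card → ∃ 𝒞 : Finset (Finset X),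
      𝒞.card ≤ (Fintype.card X + 1) ^ (s * β) ∧
      (∀ C ∈ 𝒞, (C.card : ℝ) ≤ (1 - δ) * U.card) ∧ ∀ A, P A → A ⊆ U → ∃ C ∈ 𝒞, A ⊆ C := by
    intro U hU
    have hU500 : 500 * r ^ 2 * q ^ 2 ≤ U.card := by
      have : (500 : ℝ) * r ^ 2 * q ^ 2 ≤ U.card := by
        refine le_trans (mul_le_mul_of_nonneg_right ?_ (by positivity)) hU
        exact le_mul_of_one_le_right (by positivity) h4s
      exact_mod_cast this
    have hsmall : 6 * s * C₁ * l * θ ≤ 1 := by rwa [hθinv, le_div_iff₀ hθ0] at hlarge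
    exact exists_containers hr1 sz s hs (by linarith) q θ l hdegx hC4 hH hl1 hq0 hθ0 hθ1 hθs hθq
      hsmall β hβ hβ' U hU (hgood U hU500)
  -- after `J` rounds the factor `(1 - δ) ^ J ≤ q⁻²` brings `q ^ 4` down to `q ^ 2`
  set J := ⌈2 * Real.log q / δ⌉₊ with hJdef
  have hlogl : Real.log q ≤ l := by
    rw [hldef, Real.logb]
    exact le_div_self (Real.log_nonneg (by linarith)) (Real.log_pos (by norm_num))
      (by have := Real.log_two_lt_d9; linarith)
  have hlog0 : 0 ≤ Real.log q := Real.log_nonneg (by linarith)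
  have hJ : (J : ℝ) ≤ 4 * C₁ * l ^ 2 + 1 := by
    refine (Nat.ceil_lt_add_one (by positivity)).le.trans ?_
    have : 2 * Real.log q / δ = 4 * C₁ * l * Real.log q := by
      rw [hδdef]; field_simp; ring
    rw [this]
    have : 4 * C₁ * l * Real.log q ≤ 4 * C₁ * l * l := by gcongr
    nlinarith
  obtain ⟨𝒞, h1, h2, h3⟩ := covered_iterate P δ (C₀ * (q : ℝ) ^ 2) _ hδ1
    (Nat.one_le_pow _ _ (by omega)) step Finset.univ J
  have hdecay : (1 - δ) ^ J * (Fintype.card X : ℝ) ≤ C₀ * (q : ℝ) ^ 2 := by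
    have e1 : (1 - δ) ^ J ≤ 1 / (q : ℝ) ^ 2 := by
      calc (1 - δ) ^ J ≤ (Real.exp (-δ)) ^ J :=
            pow_le_pow_left₀ (by linarith) (Real.one_sub_le_exp_neg δ) J
        _ = Real.exp (-(J * δ)) := by rw [← Real.exp_nat_mul]; ring_nf
        _ ≤ Real.exp (-(2 * Real.log q)) := by
            apply Real.exp_le_exp.2
            have : 2 * Real.log q / δ ≤ J := Nat.le_ceil _
            rw [div_le_iff₀ hδ0] at this
            linarith
        _ = 1 / (q : ℝ) ^ 2 := by
            rw [Real.exp_neg, two_mul, Real.exp_add, Real.exp_log hq0, one_div, sq]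
    have e2 : (Fintype.card X : ℝ) ≤ (q : ℝ) ^ 4 := by
      exact_mod_cast (Nat.le_succ _).trans hXq
    calc (1 - δ) ^ J * (Fintype.card X : ℝ) ≤ 1 / (q : ℝ) ^ 2 * (q : ℝ) ^ 4 := by gcongr
      _ = 1 * (q : ℝ) ^ 2 := by field_simp
      _ ≤ _ := by gcongr
  have hcount := count_of_containers P 𝒞 a ((q : ℝ) ^ (4 * s * β * J)) (C₀ * (q : ℝ) ^ 2) (by
      calc (𝒞.card : ℝ) ≤ (((Fintype.card X + 1) ^ (s * β)) ^ J : ℕ) := by exact_mod_cast h1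
        _ ≤ (((q ^ 4) ^ (s * β)) ^ J : ℕ) := by gcongr
        _ = (q : ℝ) ^ (4 * s * β * J) := by
          push_cast; rw [← pow_mul, ← pow_mul]; congr 1; ring)
    (by positivity) ha0
    (fun C hC => (h2 C hC).trans (max_le le_rfl (by simpa using hdecay)))
    (fun A hA => h3 A hA (Finset.subset_univ A))
  exact hcount.trans (final_bound q θ l C₀ C₁ s a β J (by linarith) hldef hl1 hθ0 hθq
    (by linarith) hC₁ ha hβ' hJ hK)
end

section
/- There exists a constant c > 0, depending only on r and s, such that the following holds for every sufficiently large prime q. Let F, the partitions S_1(y),…,S_r(y), and H be as in the context, with H good. Then for every U ⊆ X with |U| ≥ 500 s² q², there is a collection 𝒞_U of at most q^{4s·q^{2−1/(s−1)}} subsets of U, each of size at most (1 − c/log₂ q)·|U|, such that for every set I ⊆ U for which H[I] contains no subgraph isomorphic to K_{s_1,…,s_r}, there is some R ∈ 𝒞_U with I ⊆ R. -/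
/-! ### Families of containers and branching -/

/-- The number of lines `y ∈ L` whose surviving point set `P y` contains `u`. -/
noncomputable def lineDeg {X Y : Type*} (L : Finset Y) (P : Y → Finset X) (u : X) : ℕ :=
  open scoped Classical in (L.filter fun y => u ∈ P y).card

/-- Every line `y ∈ L` has a colour class `i` containing fewer than `z i` points of `I`, where only
the points of `P y` are counted.  Here `z` is the part of the forbidden pattern which is still
to be found. -/
def Sparse {X Y : Type*} {r : ℕ} (col : Y → X → Fin r) (z : Fin r → ℕ) (L : Finset Y)
    (P : Y → Finset X) (I : Finset X) : Prop :=
  open scoped Classical in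
  ∀ y ∈ L, ∃ i, ((P y).filter fun x => x ∈ I ∧ col y x = i).card < z i

/-- At most `B` subsets of `U`, each missing at least `θ` points of `U`, suffice to cover every
`I ⊆ U` with property `Φ`. -/
def Coverable {X : Type*} (U : Finset X) (θ : ℝ) (B : ℕ) (Φ : Finset X → Prop) : Prop :=
  ∃ 𝒞 : Finset (Finset X), 𝒞.card ≤ B ∧
    (∀ R ∈ 𝒞, R ⊆ U ∧ (R.card : ℝ) + θ ≤ U.card) ∧
    ∀ I ⊆ U, Φ I → ∃ R ∈ 𝒞, I ⊆ R

lemma Coverable.mono {X : Type*} {U : Finset X} {θ : ℝ} {B B' : ℕ} {Φ Ψ : Finset X → Prop}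
    (h : Coverable U θ B Φ) (hB : B ≤ B') (hΦ : ∀ I ⊆ U, Ψ I → Φ I) :
    Coverable U θ B' Ψ := by
  obtain ⟨𝒞, h1, h2, h3⟩ := h
  exact ⟨𝒞, h1.trans hB, h2, fun I hI hp => h3 I hI (hΦ I hI hp)⟩

/-- Branching on a large set `W`: either `I` avoids `W`, and then `U \ W` contains it, or `I`
contains some `v ∈ W`, which is recorded. -/
lemma Coverable.branch {X : Type*} {U W : Finset X} {θ : ℝ} {B : ℕ} {Φ : Finset X → Prop}
    (hWU : W ⊆ U) (hW : θ ≤ W.card)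
    (h : ∀ v ∈ W, Coverable U θ B fun I => Φ I ∧ v ∈ I) :
    Coverable U θ (1 + U.card * B) Φ := by
  classical
  choose! 𝒟 h1 h2 h3 using h
  refine ⟨insert (U \ W) (W.biUnion 𝒟), ?_, ?_, ?_⟩
  · have hb : (W.biUnion 𝒟).card ≤ W.card * B := Finset.card_biUnion_le_card_mul _ _ _ h1
    have hc := Finset.card_insert_le (U \ W) (W.biUnion 𝒟)
    have hd := Nat.mul_le_mul_right B (Finset.card_le_card hWU)
    omega
  · intro R hR
    rcases Finset.mem_insert.1 hR with rfl | hR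
    · refine ⟨Finset.sdiff_subset, ?_⟩
      have := Finset.card_sdiff_add_card_eq_card hWU
      have : ((U \ W).card : ℝ) + W.card = U.card := by exact_mod_cast this
      linarith
    · obtain ⟨v, hv, hR⟩ := Finset.mem_biUnion.1 hR
      exact h2 v hv R hR
  · intro I hI hΦ
    by_cases hd : ∃ v ∈ W, v ∈ I
    · obtain ⟨v, hv, hvI⟩ := hd
      obtain ⟨R, hR, hIR⟩ := h3 v hv I hI ⟨hΦ, hvI⟩
      exact ⟨R, Finset.mem_insert_of_mem (Finset.mem_biUnion.2 ⟨v, hv, hR⟩), hIR⟩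
    · push Not at hd
      refine ⟨U \ W, Finset.mem_insert_self _ _, fun x hx => ?_⟩
      exact Finset.mem_sdiff.2 ⟨hI hx, fun hxW => hd x hxW hx⟩

/-! ### Double counting on lines -/

lemma lineDeg_le_ncard {X Y : Type*} {L : Finset Y} {P : Y → Finset X} {u : X} {T : Set Y}
    (hT : T.Finite) (h : ∀ y ∈ L, u ∈ P y → y ∈ T) : lineDeg L P u ≤ T.ncard := by
  classical
  unfold lineDeg
  rw [← Set.ncard_coe_finset]
  refine Set.ncard_le_ncard (fun y hy => ?_) hT
  have hy' := Finset.mem_filter.1 (Finset.mem_coe.1 hy)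
  exact h y hy'.1 hy'.2

lemma sum_card_eq_sum_lineDeg {X Y : Type*} (U : Finset X) (C : Finset Y) (Q : Y → Finset X)
    (hQ : ∀ y ∈ C, Q y ⊆ U) : ∑ y ∈ C, (Q y).card = ∑ v ∈ U, lineDeg C Q v := by
  classical
  have h := Finset.sum_card_bipartiteAbove_eq_sum_card_bipartiteBelow (s := C) (t := U)
    (fun y v => v ∈ Q y)
  have e : ∀ y ∈ C, (Q y).card = (Finset.bipartiteAbove (fun y v => v ∈ Q y) U y).card := by
    intro y hy
    congr 1
    ext v
    simp only [Finset.mem_bipartiteAbove]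
    exact ⟨fun hv => ⟨hQ y hy hv, hv⟩, fun hv => hv.2⟩
  rw [Finset.sum_congr rfl e, h]
  refine Finset.sum_congr rfl fun v _ => ?_
  unfold lineDeg Finset.bipartiteBelow
  congr

lemma lineDeg_mono {X Y : Type*} {L M : Finset Y} {P Q : Y → Finset X} (hL : L ⊆ M)
    (hP : ∀ y ∈ L, P y ⊆ Q y) (u : X) : lineDeg L P u ≤ lineDeg M Q u := by
  classical
  unfold lineDeg
  refine Finset.card_le_card fun y hy => ?_
  rw [Finset.mem_filter] at hy ⊢
  exact ⟨hL hy.1, hP y hy.1 hy.2⟩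

/-- If each line in `C` has at least `g` points, all of them in `U`, all degrees are at most `Δ`, and
`W` contains every vertex of degree above `τ`, then `W` accounts for all but `|U| τ` of the at least
`|C| g` incidences.  This forces `W` to be large. -/
lemma card_heavy {X Y : Type*} (U W : Finset X) (C : Finset Y) (Q : Y → Finset X)
    {g τ Δ : ℝ} (hQ : ∀ y ∈ C, Q y ⊆ U) (hg : ∀ y ∈ C, g ≤ (Q y).card) (hτ : 0 ≤ τ)
    (hΔ : ∀ u, (lineDeg C Q u : ℝ) ≤ Δ) (hWU : W ⊆ U)
    (hW : ∀ u ∈ U, u ∉ W → (lineDeg C Q u : ℝ) ≤ τ) :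
    C.card * g ≤ U.card * τ + W.card * Δ := by
  classical
  have h1 : (C.card : ℝ) * g ≤ ∑ y ∈ C, ((Q y).card : ℝ) := by
    rw [← nsmul_eq_mul]
    exact Finset.card_nsmul_le_sum _ _ _ hg
  have h2 : ∑ y ∈ C, ((Q y).card : ℝ) = ∑ v ∈ U, (lineDeg C Q v : ℝ) := by
    exact_mod_cast sum_card_eq_sum_lineDeg U C Q hQ
  have h3 : ∑ v ∈ U \ W, (lineDeg C Q v : ℝ) ≤ (U \ W).card * τ := by
    rw [← nsmul_eq_mul]
    refine Finset.sum_le_card_nsmul _ _ _ fun v hv => ?_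
    rw [Finset.mem_sdiff] at hv
    exact hW v hv.1 hv.2
  have h4 : ∑ v ∈ W, (lineDeg C Q v : ℝ) ≤ W.card * Δ := by
    rw [← nsmul_eq_mul]
    exact Finset.sum_le_card_nsmul _ _ _ fun v _ => hΔ v
  have h5 : ((U \ W).card : ℝ) ≤ U.card := by
    exact_mod_cast Finset.card_le_card Finset.sdiff_subset
  have h6 := Finset.sum_sdiff hWU (f := fun v => (lineDeg C Q v : ℝ))
  nlinarith

open scoped Classical in
/-- Few lines contain many saturated vertices.  Here `S` consists of vertices whose degree in the new
family `L'` is at least `Δ' / 2`, and `B` of lines of `L` with at least `h / 2` points in `S`. -/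
lemma card_bad_lines {X Y : Type*} (U S : Finset X) (L L' B : Finset Y) (P P' : Y → Finset X)
    {Δ Δ' Γ h : ℝ} (hP' : ∀ y ∈ L', P' y ⊆ U)
    (hΓ : ∀ y ∈ L', ((P' y).card : ℝ) ≤ Γ)
    (hΔ : ∀ u, (lineDeg L P u : ℝ) ≤ Δ) (hΔ0 : 0 ≤ Δ)
    (hSU : S ⊆ U) (hS : ∀ u ∈ S, Δ' ≤ 2 * (lineDeg L' P' u : ℝ))
    (hBL : B ⊆ L) (hΔ0' : 0 ≤ Δ')
    (hB : ∀ y ∈ B, h ≤ 2 * (((P y).filter fun x => x ∈ S).card : ℝ)) :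
    B.card * h * Δ' ≤ 4 * L'.card * Γ * Δ := by
  have h1 : (S.card : ℝ) * Δ' ≤ ∑ u ∈ S, 2 * (lineDeg L' P' u : ℝ) := by
    rw [← nsmul_eq_mul]
    exact Finset.card_nsmul_le_sum _ _ _ hS
  have h2 : ∑ u ∈ S, (lineDeg L' P' u : ℝ) ≤ ∑ u ∈ U, (lineDeg L' P' u : ℝ) :=
    Finset.sum_le_sum_of_subset_of_nonneg hSU fun _ _ _ => Nat.cast_nonneg _
  have h3 : ∑ u ∈ U, (lineDeg L' P' u : ℝ) = ∑ y ∈ L', ((P' y).card : ℝ) := by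
    exact_mod_cast (sum_card_eq_sum_lineDeg U L' P' hP').symm
  have h4 : ∑ y ∈ L', ((P' y).card : ℝ) ≤ L'.card * Γ := by
    rw [← nsmul_eq_mul]
    exact Finset.sum_le_card_nsmul _ _ _ hΓ
  rw [← Finset.mul_sum] at h1
  have h5 : (S.card : ℝ) * Δ' ≤ 2 * (L'.card * Γ) := by linarith
  have h6 : (B.card : ℝ) * h ≤ ∑ y ∈ B, 2 * (((P y).filter fun x => x ∈ S).card : ℝ) := by
    rw [← nsmul_eq_mul]
    exact Finset.card_nsmul_le_sum _ _ _ hB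
  have h7 : ∑ y ∈ B, (((P y).filter fun x => x ∈ S).card : ℝ) =
      ∑ u ∈ S, (lineDeg B (fun y => (P y).filter fun x => x ∈ S) u : ℝ) := by
    exact_mod_cast sum_card_eq_sum_lineDeg S B (fun y => (P y).filter fun x => x ∈ S)
      (fun y _ x hx => (Finset.mem_filter.1 hx).2)
  have h8 : ∑ u ∈ S, (lineDeg B (fun y => (P y).filter fun x => x ∈ S) u : ℝ) ≤ S.card * Δ := by
    rw [← nsmul_eq_mul]
    refine Finset.sum_le_card_nsmul _ _ _ fun u _ => le_trans ?_ (hΔ u)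
    exact_mod_cast lineDeg_mono hBL (fun y _ => Finset.filter_subset _ _) u
  rw [← Finset.mul_sum] at h6
  have h9 : (B.card : ℝ) * h ≤ 2 * (S.card * Δ) := by linarith
  calc (B.card : ℝ) * h * Δ' ≤ 2 * (S.card * Δ) * Δ' := by gcongr
    _ = 2 * Δ * (S.card * Δ') := by ring
    _ ≤ 2 * Δ * (2 * (L'.card * Γ)) := by gcongr
    _ = _ := by ring

/-! ### One stage of the branching -/

/-- A family of lines `L` with surviving point sets `P y ⊆ A y` of size at most `Γ`, such that each
surviving line has at least `g` points of every colour and each point lies on at most `Δ`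
surviving lines. -/
structure Admissible {X Y : Type*} {r : ℕ} (A : Y → Finset X) (col : Y → X → Fin r)
    (Γ g Δ : ℝ) (L : Finset Y) (P : Y → Finset X) : Prop where
  sub : ∀ y ∈ L, P y ⊆ A y
  card_le : ∀ y ∈ L, ((P y).card : ℝ) ≤ Γ
  le_part : open scoped Classical in
    ∀ y ∈ L, ∀ i, g ≤ (((P y).filter fun x => col y x = i).card : ℝ)
  deg_le : ∀ u, (lineDeg L P u : ℝ) ≤ Δ

open scoped Classical in
/-- After `v` of colour `i` is known to lie in `I`, one fewer point of colour `i` has to be found on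
the line `y`. -/
lemma sparse_promote {X Y : Type*} {r : ℕ} {col : Y → X → Fin r} {z : Fin r → ℕ} {i : Fin r}
    {y : Y} {p p' I : Finset X} {v : X}
    (h : ∃ j, (p.filter fun x => x ∈ I ∧ col y x = j).card < z j)
    (hp : p' ⊆ p.erase v) (hv : v ∈ p) (hvI : v ∈ I) (hc : col y v = i) :
    ∃ j, (p'.filter fun x => x ∈ I ∧ col y x = j).card < (if j = i then z j - 1 else z j) := by
  obtain ⟨j, hj⟩ := h
  refine ⟨j, ?_⟩
  by_cases hji : j = i
  · subst hji
    have hsub : (p'.filter fun x => x ∈ I ∧ col y x = j) ⊆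
        (p.filter fun x => x ∈ I ∧ col y x = j).erase v := by
      intro x hx
      rw [Finset.mem_filter] at hx
      have := Finset.mem_erase.1 (hp hx.1)
      exact Finset.mem_erase.2 ⟨this.1, Finset.mem_filter.2 ⟨this.2, hx.2⟩⟩
    have h1 := Finset.card_le_card hsub
    have hmem : v ∈ p.filter fun x => x ∈ I ∧ col y x = j :=
      Finset.mem_filter.2 ⟨hv, hvI, hc⟩
    have h2 := Finset.card_erase_add_one hmem
    simp only [if_true]
    omega
  · simp only [hji, if_false]
    refine lt_of_le_of_lt (Finset.card_le_card ?_) hj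
    exact Finset.filter_subset_filter _ (hp.trans (Finset.erase_subset _ _))

open scoped Classical in
/-- Removing the saturated points and the chosen point `v` from the lines of `N`, all of which pass
through `v`, and adding them to `L'` keeps the degrees below `Δ'`: distinct lines through `v` meet
only in `v`, so an unsaturated point gains at most one. -/
lemma lineDeg_promote {X Y : Type*} {A : Y → Finset X} {L' N : Finset Y} {P P' : Y → Finset X}
    {S : Finset X} {v u : X} {Δ' : ℝ}
    (hlin : ∀ y₁ y₂ x₁ x₂, x₁ ≠ x₂ → x₁ ∈ A y₁ → x₂ ∈ A y₁ → x₁ ∈ A y₂ → x₂ ∈ A y₂ → y₁ = y₂)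
    (hPA : ∀ y ∈ N, P y ⊆ A y) (hv : ∀ y ∈ N, v ∈ P y) (hdisj : ∀ y ∈ L', y ∉ N)
    (hdeg : (lineDeg L' P' u : ℝ) ≤ Δ')
    (hS : ∀ y ∈ N, u ∈ P y → u ∉ S → (lineDeg L' P' u : ℝ) + 1 ≤ Δ') :
    (lineDeg (L' ∪ N) (fun y => if y ∈ N then (P y \ S).erase v else P' y) u : ℝ) ≤ Δ' := by
  have h1 : lineDeg (L' ∪ N) (fun y => if y ∈ N then (P y \ S).erase v else P' y) u ≤
      lineDeg L' P' u + (N.filter fun y => u ∈ (P y \ S).erase v).card := by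
    unfold lineDeg
    rw [Finset.filter_union]
    refine (Finset.card_union_le _ _).trans (add_le_add ?_ ?_)
    · refine Finset.card_le_card fun y hy => ?_
      rw [Finset.mem_filter] at hy ⊢
      refine ⟨hy.1, ?_⟩
      have := hy.2
      simpa only [hdisj y hy.1, if_false] using this
    · refine Finset.card_le_card fun y hy => ?_
      rw [Finset.mem_filter] at hy ⊢
      refine ⟨hy.1, ?_⟩
      have := hy.2
      simpa only [hy.1, if_true] using this
  rcases (N.filter fun y => u ∈ (P y \ S).erase v).eq_empty_or_nonempty with h0 | ⟨y, hy⟩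
  · rw [h0, Finset.card_empty, add_zero] at h1
    exact le_trans (by exact_mod_cast h1) hdeg
  · have h2 : (N.filter fun y => u ∈ (P y \ S).erase v).card ≤ 1 := by
      refine Finset.card_le_one.2 fun a ha b hb => ?_
      rw [Finset.mem_filter, Finset.mem_erase, Finset.mem_sdiff] at ha hb
      exact hlin a b u v ha.2.1 (hPA a ha.1 ha.2.2.1) (hPA a ha.1 (hv a ha.1))
        (hPA b hb.1 hb.2.2.1) (hPA b hb.1 (hv b hb.1))
    rw [Finset.mem_filter, Finset.mem_erase, Finset.mem_sdiff] at hy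
    have h3 := hS y hy.1 hy.2.2.1 hy.2.2.2
    have h4 : (lineDeg (L' ∪ N) (fun y => if y ∈ N then (P y \ S).erase v else P' y) u : ℝ) ≤
        (lineDeg L' P' u : ℝ) + 1 := by exact_mod_cast h1.trans (by omega)
    linarith

open scoped Classical in
/-- One stage of the algorithm.  Starting from a family `L` of at least `m` lines, points of `I` of
colour `i` are recorded one at a time; each of them promotes at least `τ` lines of `L` to the new
family `L'`.  At every moment either `I` avoids the set `W` of all points which would promote `τ`
lines, and `W` has at least `θ` elements, or a point of `I ∩ W` is recorded and `L'` grows by at least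
`τ` lines; `n` bounds the number of points still needed until `L'` has `m'` lines. -/
lemma coverable_stage {X Y : Type*} {r : ℕ} {U : Finset X} {A : Y → Finset X}
    {col : Y → X → Fin r} {θ Γ g g' g₀ h Δ Δ' m m' τ : ℝ} {K : ℕ} {z : Fin r → ℕ} {i : Fin r}
    {L : Finset Y} {P : Y → Finset X}
    (hAU : ∀ y, A y ⊆ U)
    (hlin : ∀ y₁ y₂ x₁ x₂, x₁ ≠ x₂ → x₁ ∈ A y₁ → x₂ ∈ A y₁ → x₁ ∈ A y₂ → x₂ ∈ A y₂ → y₁ = y₂)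
    (hLP : Admissible A col Γ g Δ L P) (hm : m ≤ L.card)
    (hK : 1 ≤ K)
    (hτ : 0 < τ) (hh : 2 ≤ h) (hg' : g' + h ≤ g) (hg₀ : g₀ ≤ g) (hg₀0 : 0 ≤ g₀) (hΔ : 0 < Δ)
    (hΔ' : 2 ≤ Δ') (hΓ : 0 ≤ Γ)
    (hbudget : U.card * τ + θ * Δ ≤ m / 2 * g₀)
    (hbad : 4 * m' * Γ * Δ ≤ m / 4 * h * Δ') (hm' : m' ≤ m / 4)
    (hnext : ∀ (L' : Finset Y) (P' : Y → Finset X), Admissible A col Γ g' Δ' L' P' →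
      m' ≤ L'.card →
      Coverable U θ K (Sparse col (fun j => if j = i then z j - 1 else z j) L' P'))
    (n : ℕ) :
    ∀ (L' : Finset Y) (P' : Y → Finset X), L' ⊆ L → Admissible A col Γ g' Δ' L' P' →
      m' ≤ L'.card + n * τ →
      Coverable U θ ((U.card + 1) ^ n * K) fun I => Sparse col z L P I ∧
        Sparse col (fun j => if j = i then z j - 1 else z j) L' P' I := by
  induction n with
  | zero =>
    intro L' P' _ hadm hcard
    refine (hnext L' P' hadm (by simpa using hcard)).mono (by simp) fun I _ hI => hI.2
  | succ n ih =>
    intro L' P' hL'L hadm hcard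
    by_cases hdone : m' ≤ L'.card
    · refine (hnext L' P' hadm hdone).mono ?_ fun I _ hI => hI.2
      exact Nat.le_mul_of_pos_left _ (by positivity)
    push Not at hdone
    -- `S` is the set of saturated points, `B` the lines with too many of them, `C` the lines of `L`
    -- which can be promoted, and `W` the points whose choice promotes at least `τ` lines.
    set S : Finset X := U.filter fun u => Δ' < lineDeg L' P' u + 1 with hSdef
    set B : Finset Y := L.filter fun y => h ≤ 2 * (((P y).filter fun x => x ∈ S).card : ℝ)
      with hBdef
    set C : Finset Y := (L \ L') \ B with hCdef
    set Q : Y → Finset X := fun y => (P y).filter fun x => col y x = i with hQdef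
    set W : Finset X := U.filter fun u => τ ≤ lineDeg C Q u with hWdef
    have hCL : C ⊆ L := Finset.sdiff_subset.trans Finset.sdiff_subset
    have hBcard : (B.card : ℝ) ≤ m / 4 := by
      have h1 : (B.card : ℝ) * h * Δ' ≤ 4 * L'.card * Γ * Δ := by
        refine card_bad_lines U S L L' B P P' (fun y hy => (hadm.sub y hy).trans (hAU y))
          hadm.card_le hLP.deg_le hΔ.le (Finset.filter_subset _ _) ?_ (Finset.filter_subset _ _)
          (by linarith) fun y hy => (Finset.mem_filter.1 hy).2
        intro u hu
        have := (Finset.mem_filter.1 hu).2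
        linarith
      have h2 : 4 * (L'.card : ℝ) * Γ * Δ ≤ 4 * m' * Γ * Δ := by gcongr
      have h3 : (B.card : ℝ) * (h * Δ') ≤ m / 4 * (h * Δ') := by linarith
      exact le_of_mul_le_mul_right h3 (by positivity)
    have hCcard : m / 2 ≤ C.card := by
      have h1 : L.card ≤ C.card + L'.card + B.card := by
        have e1 := Finset.le_card_sdiff B (L \ L')
        rw [← hCdef] at e1
        have e2 := Finset.le_card_sdiff L' L
        omega
      have h2 : (L.card : ℝ) ≤ C.card + L'.card + B.card := by exact_mod_cast h1
      linarith
    have hWcard : θ ≤ W.card := by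
      have hdegQ : ∀ u, (lineDeg C Q u : ℝ) ≤ Δ := by
        intro u
        have h0 : lineDeg C Q u ≤ lineDeg L P u :=
          lineDeg_mono hCL (fun y _ => Finset.filter_subset _ _) u
        have h1 : (lineDeg C Q u : ℝ) ≤ lineDeg L P u := by exact_mod_cast h0
        exact h1.trans (hLP.deg_le u)
      have hlight : ∀ u ∈ U, u ∉ W → (lineDeg C Q u : ℝ) ≤ τ := by
        intro u hu huW
        by_contra hcon
        exact huW (Finset.mem_filter.2 ⟨hu, (not_le.1 hcon).le⟩)
      have h1 := card_heavy U W C Q (g := g₀) (τ := τ) (Δ := Δ)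
        (fun y hy => ((Finset.filter_subset _ _).trans (hLP.sub y (hCL hy))).trans (hAU y))
        (fun y hy => hg₀.trans (hLP.le_part y (hCL hy) i)) hτ.le
        hdegQ (Finset.filter_subset _ _) hlight
      have h2 : m / 2 * g₀ ≤ C.card * g₀ := by gcongr
      exact le_of_mul_le_mul_right (by linarith) hΔ
    refine (Coverable.branch (B := (U.card + 1) ^ n * K) (Finset.filter_subset _ _) hWcard ?_).mono
      ?_ fun I _ hI => hI
    · intro v hv
      have hvdeg : τ ≤ lineDeg C Q v := (Finset.mem_filter.1 hv).2
      set N : Finset Y := C.filter fun y => v ∈ Q y with hNdef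
      have hNcard : lineDeg C Q v = N.card := rfl
      have hNC : N ⊆ C := Finset.filter_subset _ _
      have hdisj : ∀ y ∈ L', y ∉ N := fun y hy hyN =>
        (Finset.mem_sdiff.1 (Finset.mem_sdiff.1 (hNC hyN)).1).2 hy
      have hvP : ∀ y ∈ N, v ∈ P y ∧ col y v = i := fun y hy =>
        Finset.mem_filter.1 (Finset.mem_filter.1 hy).2
      have hPA : ∀ y ∈ N, P y ⊆ A y := fun y hy => hLP.sub y (hCL (hNC hy))
      have herase : ∀ y, (P y \ S).erase v ⊆ (P y).erase v := fun y =>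
        Finset.erase_subset_erase _ Finset.sdiff_subset
      refine (ih (L' ∪ N) (fun y => if y ∈ N then (P y \ S).erase v else P' y) ?_ ?_ ?_).mono
        le_rfl ?_
      · exact Finset.union_subset hL'L (hNC.trans hCL)
      · constructor
        · intro y hy
          by_cases hyN : y ∈ N
          · simp only [hyN, if_true]
            exact ((herase y).trans (Finset.erase_subset _ _)).trans (hPA y hyN)
          · simp only [hyN, if_false]
            exact hadm.sub y ((Finset.mem_union.1 hy).resolve_right hyN)
        · intro y hy
          by_cases hyN : y ∈ N
          · simp only [hyN, if_true]
            refine le_trans ?_ (hLP.card_le y (hCL (hNC hyN)))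
            exact_mod_cast Finset.card_le_card ((herase y).trans (Finset.erase_subset _ _))
          · simp only [hyN, if_false]
            exact hadm.card_le y ((Finset.mem_union.1 hy).resolve_right hyN)
        · intro y hy j
          by_cases hyN : y ∈ N
          · simp only [hyN, if_true]
            have hyB : y ∉ B := (Finset.mem_sdiff.1 (hNC hyN)).2
            have hyL := hCL (hNC hyN)
            have h1 : 2 * (((P y).filter fun x => x ∈ S).card : ℝ) < h := by
              by_contra hcon
              exact hyB (Finset.mem_filter.2 ⟨hyL, not_lt.1 hcon⟩)
            have h2 : (P y).filter (fun x => col y x = j) ⊆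
                ((P y \ S).erase v).filter (fun x => col y x = j) ∪
                  (((P y).filter fun x => x ∈ S) ∪ {v}) := by
              intro x hx
              simp only [Finset.mem_union, Finset.mem_filter, Finset.mem_erase, Finset.mem_sdiff,
                Finset.mem_singleton] at hx ⊢
              tauto
            have h3 := (Finset.card_le_card h2).trans ((Finset.card_union_le _ _).trans
              (Nat.add_le_add_left (Finset.card_union_le _ _) _))
            rw [Finset.card_singleton] at h3
            have h4 : (((P y).filter (fun x => col y x = j)).card : ℝ) ≤
                (((P y \ S).erase v).filter (fun x => col y x = j)).card +
                  (((P y).filter fun x => x ∈ S).card + 1) := by exact_mod_cast h3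
            have h5 := hLP.le_part y hyL j
            linarith
          · simp only [hyN, if_false]
            exact hadm.le_part y ((Finset.mem_union.1 hy).resolve_right hyN) j
        · intro u
          refine lineDeg_promote hlin hPA (fun y hy => (hvP y hy).1) hdisj (hadm.deg_le u) ?_
          intro y hy huP huS
          by_contra hcon
          exact huS (Finset.mem_filter.2 ⟨hAU y (hPA y hy huP), not_le.1 hcon⟩)
      · have h1 : (L' ∪ N).card = L'.card + N.card :=
          Finset.card_union_of_disjoint (Finset.disjoint_left.2 hdisj)
        rw [h1]
        push_cast at hcard ⊢
        rw [hNcard] at hvdeg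
        linarith
      · rintro I _ ⟨⟨hI1, hI2⟩, hvI⟩
        refine ⟨hI1, fun y hy => ?_⟩
        by_cases hyN : y ∈ N
        · simp only [hyN, if_true]
          exact sparse_promote (hI1 y (hCL (hNC hyN))) (herase y) (hvP y hyN).1 hvI (hvP y hyN).2
        · simp only [hyN, if_false]
          exact hI2 y ((Finset.mem_union.1 hy).resolve_right hyN)
    · have h1 : 1 ≤ (U.card + 1) ^ n * K := Nat.mul_pos (by positivity) hK
      rw [pow_succ]
      nlinarith

/-! ### All stages -/

open scoped Classical in
/-- The last stage: when a single point of the pattern is missing on every line of `L`, the set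
`I` avoids a whole colour class of each of these lines. -/
lemma coverable_last {X Y : Type*} {r : ℕ} {U : Finset X} {A : Y → Finset X}
    {col : Y → X → Fin r} {θ Γ g g₀ Δ m : ℝ} {z : Fin r → ℕ}
    {L : Finset Y} {P : Y → Finset X}
    (hAU : ∀ y, A y ⊆ U) (hLP : Admissible A col Γ g Δ L P) (hm : m ≤ L.card)
    (hz : ∑ j, z j = 1) (hg₀ : g₀ ≤ g) (hg₀0 : 0 ≤ g₀) (hΔ : 0 < Δ) (hθ : θ * Δ ≤ m * g₀) :
    Coverable U θ 1 (Sparse col z L P) := by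
  obtain ⟨i, hi⟩ : ∃ i, 0 < z i := by
    by_contra hcon
    push Not at hcon
    have : ∑ j, z j = 0 := Finset.sum_eq_zero fun j _ => Nat.le_zero.1 (hcon j)
    omega
  set Q : Y → Finset X := fun y => (P y).filter fun x => col y x = i with hQdef
  set W : Finset X := U.filter fun u => 0 < lineDeg L Q u with hWdef
  have hWcard : θ ≤ W.card := by
    have h1 := card_heavy U W L Q (g := g₀) (τ := 0) (Δ := Δ)
      (fun y hy => ((Finset.filter_subset _ _).trans (hLP.sub y hy)).trans (hAU y))
      (fun y hy => hg₀.trans (hLP.le_part y hy i)) le_rfl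
      (fun u => by
        have h0 : lineDeg L Q u ≤ lineDeg L P u :=
          lineDeg_mono le_rfl (fun y _ => Finset.filter_subset _ _) u
        have h1 : (lineDeg L Q u : ℝ) ≤ lineDeg L P u := by exact_mod_cast h0
        exact h1.trans (hLP.deg_le u))
      (Finset.filter_subset _ _) (fun u hu huW => by
        have : ¬ 0 < lineDeg L Q u := fun h => huW (Finset.mem_filter.2 ⟨hu, h⟩)
        have : lineDeg L Q u = 0 := by omega
        simp [this])
    have h2 : m * g₀ ≤ L.card * g₀ := by gcongr
    exact le_of_mul_le_mul_right (by linarith) hΔ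
  refine (Coverable.branch (B := 0) (Finset.filter_subset _ _) hWcard fun v hv => ?_).mono
    (by simp) fun I _ hI => hI
  -- A point `v` of `W` lies on a line of `L` in colour `i`, so it cannot belong to `I`.
  refine ⟨∅, by simp, by simp, fun I _ hI => ?_⟩
  exfalso
  have hdeg : 0 < lineDeg L Q v := (Finset.mem_filter.1 hv).2
  obtain ⟨y, hy⟩ := Finset.card_pos.1 hdeg
  obtain ⟨hyL, hvQ⟩ := Finset.mem_filter.1 hy
  obtain ⟨hvP, hvc⟩ := Finset.mem_filter.1 hvQ
  obtain ⟨j, hj⟩ := hI.1 y hyL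
  by_cases hji : j = i
  · subst hji
    have h1 : z j ≤ ∑ j, z j := Finset.single_le_sum (fun _ _ => Nat.zero_le _) (Finset.mem_univ j)
    have h2 : 0 < ((P y).filter fun x => x ∈ I ∧ col y x = j).card :=
      Finset.card_pos.2 ⟨v, Finset.mem_filter.2 ⟨hvP, hI.2, hvc⟩⟩
    omega
  · have h1 : z j + z i ≤ ∑ j, z j := by
      rw [← Finset.sum_pair hji]
      exact Finset.sum_le_sum_of_subset (Finset.subset_univ _)
    omega

/-- All stages together, by induction on the number `k + 1` of points of the pattern `z` which
remain to be found.  Each stage multiplies the degree bound by `β` and the number of lines by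
`ρ * β`, and costs at most `n` recorded points. -/
lemma coverable_rounds {X Y : Type*} {r : ℕ} {U : Finset X} {A : Y → Finset X}
    {col : Y → X → Fin r} {θ Γ g₀ h β ρ : ℝ} {n : ℕ}
    (hAU : ∀ y, A y ⊆ U)
    (hlin : ∀ y₁ y₂ x₁ x₂, x₁ ≠ x₂ → x₁ ∈ A y₁ → x₂ ∈ A y₁ → x₁ ∈ A y₂ → x₂ ∈ A y₂ → y₁ = y₂)
    (hU : 0 < U.card) (hβ : 0 < β) (hβ1 : β ≤ 1) (hρ : 0 < ρ) (hρ1 : ρ ≤ 1 / 4)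
    (hg₀ : 0 < g₀) (hh : 2 ≤ h) (hΓ : 0 ≤ Γ) (hρΓ : 16 * ρ * Γ ≤ h)
    (hn : 4 * U.card * ρ * β ≤ n * g₀) (k : ℕ) :
    ∀ (z : Fin r → ℕ), ∑ j, z j = k + 1 → ∀ (m Δ g : ℝ) (L : Finset Y) (P : Y → Finset X),
      Admissible A col Γ g Δ L P → m ≤ L.card → 0 < m → 0 < Δ → 2 ≤ Δ * β ^ k →
      g₀ + k * h ≤ g → 4 * Δ * θ ≤ ρ ^ k * m * g₀ →
      Coverable U θ ((U.card + 1) ^ (n * k)) (Sparse col z L P) := by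
  have hU' : (0 : ℝ) < U.card := by exact_mod_cast hU
  induction k with
  | zero =>
    intro z hz m Δ g L P hLP hm hm0 hΔ _ hg hθ
    refine (coverable_last hAU hLP hm hz (by simpa using hg) hg₀.le hΔ ?_).mono (by simp)
      fun I _ hI => hI
    have : 0 < m * g₀ := by positivity
    rw [pow_zero] at hθ
    linarith
  | succ k ih =>
    intro z hz m Δ g L P hLP hm hm0 hΔ hΔβ hg hθ
    push_cast at hg
    obtain ⟨i, hi⟩ : ∃ i, 0 < z i := by
      by_contra hcon
      push Not at hcon
      have : ∑ j, z j = 0 := Finset.sum_eq_zero fun j _ => Nat.le_zero.1 (hcon j)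
      omega
    have hz' : ∑ j, (if j = i then z j - 1 else z j) = k + 1 := by
      have h1 := Finset.add_sum_erase Finset.univ z (Finset.mem_univ i)
      have h2 := Finset.add_sum_erase Finset.univ (fun j => if j = i then z j - 1 else z j)
        (Finset.mem_univ i)
      have h3 : ∑ j ∈ Finset.univ.erase i, (if j = i then z j - 1 else z j) =
          ∑ j ∈ Finset.univ.erase i, z j :=
        Finset.sum_congr rfl fun j hj => if_neg (Finset.ne_of_mem_erase hj)
      simp only [if_true] at h2
      omega
    have hkh : 0 ≤ (k : ℝ) * h := by positivity
    have hΔ' : 2 ≤ β * Δ := by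
      have h1 : β ^ k ≤ 1 := pow_le_one₀ hβ.le hβ1
      have h2 : β * Δ * β ^ k ≤ β * Δ * 1 := by gcongr
      rw [pow_succ] at hΔβ
      linarith
    have hmg : 4 * Δ * θ ≤ m * g₀ := by
      have h1 : ρ ^ (k + 1) ≤ 1 := pow_le_one₀ hρ.le (by linarith)
      have h2 : ρ ^ (k + 1) * (m * g₀) ≤ 1 * (m * g₀) := by gcongr
      linarith
    have hτ : U.card * (m * g₀ / (4 * U.card)) = m * g₀ / 4 := by field_simp
    have hstage := coverable_stage (U := U) (A := A) (col := col) (θ := θ) (Γ := Γ) (g := g)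
      (g' := g - h) (g₀ := g₀) (h := h) (Δ := Δ) (Δ' := β * Δ) (m := m) (m' := ρ * β * m)
      (τ := m * g₀ / (4 * U.card)) (K := (U.card + 1) ^ (n * k)) (z := z) (i := i)
      hAU hlin hLP hm (Nat.one_le_pow _ _ (by omega)) (by positivity) hh (by linarith)
      (by linarith) hg₀.le hΔ hΔ' hΓ (by linarith)
      (by
        have h1 : (16 * ρ * Γ) * (β * m * Δ) ≤ h * (β * m * Δ) := by gcongr
        linarith)
      (by
        have h1 : ρ * β ≤ 1 / 4 * 1 := by gcongr
        have h2 : ρ * β * m ≤ 1 / 4 * 1 * m := by gcongr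
        linarith)
      (fun L' P' hadm hcard => by
        refine ih _ hz' (ρ * β * m) (β * Δ) (g - h) L' P' hadm hcard (by positivity)
          (by positivity) ?_ (by linarith) ?_
        · rw [pow_succ] at hΔβ
          linarith
        · have h1 : β * (4 * Δ * θ) ≤ β * (ρ ^ (k + 1) * m * g₀) := by gcongr
          rw [pow_succ] at h1
          linarith)
      n ∅ (fun _ => ∅) (Finset.empty_subset _)
      ⟨by simp, by simp, by simp, fun u => by simp [lineDeg]; linarith⟩
      (by
        have h1 : (4 * U.card * ρ * β) * m ≤ n * g₀ * m := by gcongr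
        rw [Finset.card_empty, Nat.cast_zero, zero_add, ← mul_div_assoc,
          le_div_iff₀ (by positivity)]
        linarith)
    refine hstage.mono (le_of_eq ?_) fun I _ hI => ⟨hI, fun y hy => by simp at hy⟩
    rw [← pow_add]
    congr 1
    ring

/-! ### Copies of the complete multipartite graph -/

open scoped Classical in
/-- If `H[I]` contains no copy of `K_{s_1,…,s_r}`, then every line has a colour class in which `I`
has fewer than `s_i` points: otherwise the complete `r`-partite graph which the line contributes to
`H` would contain a copy. -/
lemma sparse_of_not_containsCopy {X Y : Type*} {r : ℕ} {sz : Fin r → ℕ} {E : X → Y → Prop}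
    {part : Y → X → Fin r} {H : SimpleGraph X} {U I : Finset X} {L : Finset Y}
    (hH : ∀ x₁ x₂, H.Adj x₁ x₂ ↔ ∃ (y : Y) (i j : Fin r), i ≠ j ∧
      (E x₁ y ∧ part y x₁ = i) ∧ (E x₂ y ∧ part y x₂ = j))
    (hI : ¬ ContainsCopy (SimpleGraph.completeMultipartiteGraph fun i => Fin (sz i))
      (H.induce (I : Set X))) :
    Sparse part sz L (fun y => U.filter fun x => E x y) I := by
  intro y _
  by_contra hcon
  push Not at hcon
  apply hI
  set T : Fin r → Finset X := fun i =>
    (U.filter fun x => E x y).filter fun x => x ∈ I ∧ part y x = i with hT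
  have hmem : ∀ i x, x ∈ T i → E x y ∧ x ∈ I ∧ part y x = i := by
    intro i x hx
    obtain ⟨h1, h2⟩ := Finset.mem_filter.1 hx
    exact ⟨(Finset.mem_filter.1 h1).2, h2⟩
  have hemb : ∀ i, Nonempty (Fin (sz i) ↪ T i) := fun i =>
    Function.Embedding.nonempty_of_card_le (by simpa using hcon i)
  have e : ∀ i, Fin (sz i) ↪ T i := fun i => (hemb i).some
  refine ⟨fun p => ⟨(e p.1 p.2 : X), (hmem _ _ (e p.1 p.2).2).2.1⟩, ?_, ?_⟩
  · rintro ⟨i, a⟩ ⟨j, b⟩ hab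
    have hab' : (e i a : X) = e j b := congrArg Subtype.val hab
    have hij : i = j := by
      rw [← (hmem _ _ (e i a).2).2.2, ← (hmem _ _ (e j b).2).2.2, hab']
    subst hij
    rw [(e i).injective (Subtype.ext hab')]
  · rintro ⟨i, a⟩ ⟨j, b⟩ hab
    have hij : i ≠ j := hab
    have h1 := hmem _ _ (e i a).2
    have h2 := hmem _ _ (e j b).2
    exact (hH _ _).2 ⟨y, i, j, hij, ⟨h1.1, h1.2.2⟩, h2.1, h2.2.2⟩

/-! ### Choice of the constants -/

/-- Converts the count of branches into the bound of the theorem; here `N = |U|`, `k = s - 1`, and `n`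
is the number of points recorded per stage. -/
lemma card_bound {q N n k s : ℕ} {b : ℝ} (hq : 1 ≤ q) (hN : N + 1 ≤ q ^ 4) (hb : (n : ℝ) ≤ b)
    (hk : k ≤ s) : (((N + 1) ^ (n * k) : ℕ) : ℝ) ≤ (q : ℝ) ^ (4 * (s : ℝ) * b) := by
  have hq' : (1 : ℝ) ≤ q := by exact_mod_cast hq
  have hk' : (k : ℝ) ≤ s := by exact_mod_cast hk
  have h1 : (N + 1) ^ (n * k) ≤ (q ^ 4) ^ (n * k) := Nat.pow_le_pow_left hN _
  have h2 : (((N + 1) ^ (n * k) : ℕ) : ℝ) ≤ (q : ℝ) ^ (4 * (n * k)) := by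
    rw [← pow_mul] at h1
    exact_mod_cast h1
  refine h2.trans ?_
  rw [← Real.rpow_natCast]
  refine Real.rpow_le_rpow_of_exponent_le hq' ?_
  push_cast
  have h3 : (n : ℝ) * k ≤ b * s := mul_le_mul hb hk' (Nat.cast_nonneg _) ((Nat.cast_nonneg _).trans hb)
  linarith

/-- The powers of `q` that occur: with `β = q ^ (-1/k)` one has `β ^ k = 1 / q` and
`q² β = q ^ (2 - 1/k) ≥ q`. -/
lemma beta_facts {q k : ℕ} (hq : 2 ≤ q) (hk : 1 ≤ k) :
    ∃ β : ℝ, 0 < β ∧ β ≤ 1 ∧ (q : ℝ) * β ^ k = 1 ∧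
      (q : ℝ) ^ 2 * β = (q : ℝ) ^ (2 - 1 / (k : ℝ)) ∧ 2 ≤ (q : ℝ) ^ 2 * β := by
  have hq' : (2 : ℝ) ≤ q := by exact_mod_cast hq
  have hq0 : (0 : ℝ) < q := by linarith
  have hk' : (1 : ℝ) ≤ k := by exact_mod_cast hk
  have hinv : 1 / (k : ℝ) ≤ 1 := (div_le_one (by linarith)).2 hk'
  have hinv0 : 0 ≤ 1 / (k : ℝ) := by positivity
  have heq : (q : ℝ) ^ 2 * (q : ℝ) ^ (-(1 / (k : ℝ))) = (q : ℝ) ^ (2 - 1 / (k : ℝ)) := by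
    rw [← Real.rpow_two, ← Real.rpow_add hq0]
    ring_nf
  refine ⟨(q : ℝ) ^ (-(1 / (k : ℝ))), by positivity, ?_, ?_, heq, ?_⟩
  · exact Real.rpow_le_one_of_one_le_of_nonpos (by linarith) (by linarith)
  · rw [← Real.rpow_natCast, ← Real.rpow_mul hq0.le,
      show -(1 / (k : ℝ)) * k = -1 by field_simp, Real.rpow_neg_one]
    exact mul_inv_cancel₀ hq0.ne'
  · rw [heq]
    calc (2 : ℝ) ≤ (q : ℝ) ^ (1 : ℝ) := by rwa [Real.rpow_one]
      _ ≤ _ := Real.rpow_le_rpow_of_exponent_le (by linarith) (by linarith)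

open scoped Classical in
/-- The whole argument for one set `U`, with the goodness of `H` entering through `γ` and the
family `L` of lines whose colour classes in `U` all have between `γ / (10 r)` and `γ` points. -/
lemma coverable_of_lines {X Y : Type*} {r q k : ℕ} {sz : Fin r → ℕ} {U : Finset X}
    {A : Y → Finset X} {col : Y → X → Fin r} {L : Finset Y} {γ l : ℝ}
    (hr : 2 ≤ r) (hrk : r ≤ k + 1) (hsz : ∑ i, sz i = k + 1) (hq : 2 ≤ q)
    (hUcard : 500 * (k + 1) ^ 2 * q ^ 2 ≤ U.card) (hl : 0 < l)
    (hAU : ∀ y, A y ⊆ U)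
    (hlin : ∀ y₁ y₂ x₁ x₂, x₁ ≠ x₂ → x₁ ∈ A y₁ → x₂ ∈ A y₁ → x₁ ∈ A y₂ → x₂ ∈ A y₂ → y₁ = y₂)
    (hdeg : ∀ u, lineDeg L A u ≤ q + 1)
    (hγ : (U.card : ℝ) / (q : ℝ) ^ 2 ≤ γ)
    (hL : (U.card : ℝ) * q / (8 * γ * l) ≤ L.card)
    (hpart : ∀ y ∈ L, ∀ i, γ / (10 * r) ≤ (((A y).filter fun x => col y x = i).card : ℝ) ∧
      (((A y).filter fun x => col y x = i).card : ℝ) ≤ γ) :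
    ∃ n : ℕ, (n : ℝ) ≤ (q : ℝ) ^ (2 - 1 / (k : ℝ)) ∧
      Coverable U ((1 / (320 * r ^ 2 * (k + 1))) ^ k / (1280 * r) / l * U.card)
        ((U.card + 1) ^ (n * k)) (Sparse col sz L A) := by
  obtain ⟨β, hβ, hβ1, hβk, hβq, hβ2⟩ := beta_facts hq (show 1 ≤ k by omega)
  have hq' : (2 : ℝ) ≤ q := by exact_mod_cast hq
  have hr' : (2 : ℝ) ≤ r := by exact_mod_cast hr
  have hk' : (1 : ℝ) ≤ k := by exact_mod_cast (show 1 ≤ k by omega)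
  have hrk' : (r : ℝ) ≤ k + 1 := by exact_mod_cast hrk
  have hU' : 500 * ((k : ℝ) + 1) ^ 2 * (q : ℝ) ^ 2 ≤ U.card := by exact_mod_cast hUcard
  have hU0 : (0 : ℝ) < U.card := lt_of_lt_of_le (by positivity) hU'
  have hγ1 : 500 * ((k : ℝ) + 1) ^ 2 ≤ γ := by
    refine le_trans ?_ hγ
    rwa [le_div_iff₀ (by positivity)]
  have hγ0 : 0 < γ := lt_of_lt_of_le (by positivity) hγ1
  have hUγ : (U.card : ℝ) ≤ γ * (q : ℝ) ^ 2 := by rwa [div_le_iff₀ (by positivity)] at hγ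
  set ρ : ℝ := 1 / (320 * r ^ 2 * (k + 1)) with hρdef
  have hρ0 : 0 < ρ := by positivity
  have hρr : ρ * (640 * r) ≤ 1 := by
    rw [hρdef, div_mul_eq_mul_div, one_mul, div_le_one (by positivity)]
    have h1 : (1 : ℝ) * (640 * r) ≤ (k : ℝ) * (640 * r) := by gcongr
    have h2 : (2 : ℝ) * r * (320 * (k + 1)) ≤ r * r * (320 * (k + 1)) := by gcongr
    linarith [h1, h2]
  -- The factor `1 / 8` leaves room for rounding up, as `q ^ 2 * β ≥ 2`.
  refine ⟨⌈(q : ℝ) ^ 2 * β / 8⌉₊, ?_, ?_⟩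
  · have h1 := (Nat.ceil_lt_add_one (show 0 ≤ (q : ℝ) ^ 2 * β / 8 by positivity)).le
    rw [← hβq]
    linarith
  refine coverable_rounds (Γ := r * γ) (g₀ := γ / (20 * r)) (h := γ / (20 * r * (k + 1))) (β := β)
    (ρ := ρ) hAU hlin (by exact_mod_cast hU0) hβ hβ1 hρ0 ?_ (by positivity) ?_ (by positivity) ?_
    ?_ k sz hsz (U.card * q / (8 * γ * l)) (2 * q) (γ / (10 * r)) L A ?_ hL (by positivity)
    (by positivity) ?_ ?_ ?_
  · have h1 : ρ * (640 * 2) ≤ ρ * (640 * r) := by gcongr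
    linarith
  · rw [le_div_iff₀ (by positivity)]
    have h1 : (r : ℝ) * (40 * (k + 1)) ≤ (k + 1) * (40 * (k + 1)) := by gcongr
    have h2 : (0 : ℝ) ≤ (k + 1) ^ 2 := by positivity
    linarith
  · rw [hρdef]
    apply le_of_eq
    field_simp
    norm_num
  · have h1 : (q : ℝ) ^ 2 * β / 8 ≤ ⌈(q : ℝ) ^ 2 * β / 8⌉₊ := Nat.le_ceil _
    calc 4 * (U.card : ℝ) * ρ * β ≤ 4 * (γ * (q : ℝ) ^ 2) * ρ * β := by gcongr
      _ = (q : ℝ) ^ 2 * β / 8 * (γ / (20 * r)) * (ρ * (640 * r)) := by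
        field_simp
        norm_num
      _ ≤ (q : ℝ) ^ 2 * β / 8 * (γ / (20 * r)) * 1 := by gcongr
      _ ≤ _ := by
        rw [mul_one]
        gcongr
  · refine ⟨fun y _ => Finset.Subset.refl _, fun y hy => ?_, fun y hy i => (hpart y hy i).1,
      fun u => ?_⟩
    · have h1 : (A y).card = ∑ i, ((A y).filter fun x => col y x = i).card :=
        Finset.card_eq_sum_card_fiberwise fun x _ => Finset.mem_univ _
      rw [h1, Nat.cast_sum]
      have h2 := Finset.sum_le_card_nsmul (Finset.univ : Finset (Fin r))
        (fun i => (((A y).filter fun x => col y x = i).card : ℝ)) γ fun i _ => (hpart y hy i).2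
      rwa [nsmul_eq_mul, Finset.card_univ, Fintype.card_fin] at h2
    · have h1 : (lineDeg L A u : ℝ) ≤ q + 1 := by exact_mod_cast hdeg u
      linarith
  · linarith
  · apply le_of_eq_of_le (b := γ / (10 * r) - γ / (20 * r * (k + 1)))
    · field_simp
      ring
    · have : 0 ≤ γ / (20 * r * (k + 1)) := by positivity
      linarith
  · apply le_of_eq
    field_simp
    ring

theorem stmt17 (r : ℕ) (hr : 2 ≤ r) (sz : Fin r → ℕ) (hsz : ∀ i, 0 < sz i) :
    ∃ c : ℝ, 0 < c ∧ ∃ q₀ : ℕ, ∀ q : ℕ, Nat.Prime q → q₀ ≤ q →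
      ∀ (X Y : Type) [Fintype X] [Fintype Y] [DecidableEq X],
        ∀ (E : X → Y → Prop) (part : Y → X → Fin r) (H : SimpleGraph X),
        -- sizes of the two sides of the bipartite graph `F`:
        Fintype.card X = q ^ 4 - q ^ 3 + q ^ 2 →
        Fintype.card Y = q ^ 3 + 1 →
        -- degrees in `F`:
        (∀ x : X, Set.ncard {y : Y | E x y} = q + 1) →
        (∀ y : Y, Set.ncard {x : X | E x y} = q ^ 2) →
        -- `F` is `C₄`-free:
        (∀ x₁ x₂ y₁ y₂, x₁ ≠ x₂ → y₁ ≠ y₂ →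
          E x₁ y₁ → E x₁ y₂ → E x₂ y₁ → E x₂ y₂ → False) →
        -- `F` contains no subdivision of `K₄` with branch vertices in `X`:
        (¬ ∃ (x : Fin 4 → X) (y : Fin 4 → Fin 4 → Y),
          Function.Injective x ∧
          (∀ i j, i < j → E (x i) (y i j) ∧ E (x j) (y i j)) ∧
          (∀ i j k l, i < j → k < l → (i, j) ≠ (k, l) → y i j ≠ y k l)) →
        -- `H` is the graph on `X` obtained by embedding, for each `y`, a complete
        -- `r`-partite graph on the parts `S i y = {x | E x y ∧ part y x = i}`:
        (∀ x₁ x₂, H.Adj x₁ x₂ ↔ ∃ (y : Y) (i j : Fin r), i ≠ j ∧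
          (E x₁ y ∧ part y x₁ = i) ∧ (E x₂ y ∧ part y x₂ = j)) →
        -- `H` is good:
        (∀ U : Finset X, 500 * r ^ 2 * q ^ 2 ≤ U.card →
          ∃ γ : ℝ, (U.card : ℝ) / (q : ℝ) ^ 2 ≤ γ ∧
            (U.card : ℝ) * q / (8 * γ * Real.logb 2 q) ≤
              (Set.ncard {y : Y | ∀ i : Fin r,
                γ / (10 * r) ≤ (Set.ncard {x : X | x ∈ U ∧ E x y ∧ part y x = i} : ℝ) ∧
                (Set.ncard {x : X | x ∈ U ∧ E x y ∧ part y x = i} : ℝ) ≤ γ} : ℝ)) →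
        ∀ U : Finset X, 500 * (∑ i, sz i) ^ 2 * q ^ 2 ≤ U.card →
          ∃ 𝒞 : Finset (Finset X),
            (𝒞.card : ℝ) ≤ (q : ℝ) ^
                (4 * (∑ i, sz i : ℕ) * (q : ℝ) ^ (2 - 1 / ((∑ i, sz i : ℕ) - 1 : ℝ))) ∧
            (∀ R ∈ 𝒞, R ⊆ U ∧
              (R.card : ℝ) ≤ (1 - c / Real.logb 2 (q : ℝ)) * (U.card : ℝ)) ∧
            ∀ I : Finset X, I ⊆ U →
              ¬ ContainsCopy (SimpleGraph.completeMultipartiteGraph fun i => Fin (sz i))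
                  (H.induce (I : Set X)) →
              ∃ R ∈ 𝒞, I ⊆ R := by
  classical
  obtain ⟨k, hk⟩ : ∃ k, ∑ i, sz i = k + 1 := by
    have h1 : r ≤ ∑ i, sz i := by
      have := Finset.card_nsmul_le_sum Finset.univ sz 1 fun i _ => hsz i
      simpa using this
    exact ⟨∑ i, sz i - 1, by omega⟩
  have hrk : r ≤ k + 1 := by
    have := Finset.card_nsmul_le_sum Finset.univ sz 1 fun i _ => hsz i
    rw [← hk]
    simpa using this
  refine ⟨(1 / (320 * r ^ 2 * (k + 1))) ^ k / (1280 * r), by positivity, 2, ?_⟩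
  intro q _ hq X Y _ _ _ E part H hX _ hdegX _ hC4 _ hH hgood U hU
  have hl : 0 < Real.logb 2 (q : ℝ) :=
    Real.logb_pos (by norm_num) (by exact_mod_cast (show 1 < q by omega))
  rw [hk] at hU ⊢
  obtain ⟨γ, hγ, hlines⟩ := hgood U (le_trans (by gcongr) hU)
  set A : Y → Finset X := fun y => U.filter fun x => E x y with hA
  have hcard : ∀ y i, Set.ncard {x : X | x ∈ U ∧ E x y ∧ part y x = i} =
      ((A y).filter fun x => part y x = i).card := by
    intro y i
    rw [← Set.ncard_coe_finset]
    congr 1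
    ext x
    simp [hA, and_assoc]
  set L : Finset Y := Finset.univ.filter fun y => ∀ i : Fin r,
    γ / (10 * r) ≤ (((A y).filter fun x => part y x = i).card : ℝ) ∧
      (((A y).filter fun x => part y x = i).card : ℝ) ≤ γ with hLdef
  have hLcard : (U.card : ℝ) * q / (8 * γ * Real.logb 2 q) ≤ L.card := by
    refine hlines.trans (le_of_eq ?_)
    rw [← Set.ncard_coe_finset]
    congr 2
    ext y
    simp [hLdef, hcard]
  obtain ⟨n, hn, 𝒞, h1, h2, h3⟩ := coverable_of_lines (X := X) (sz := sz) (U := U) (A := A)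
    (col := part) (L := L) (γ := γ) hr hrk hk hq hU hl (fun y => Finset.filter_subset _ _)
    (fun y₁ y₂ x₁ x₂ hx a b c d => by
      by_contra hy
      exact hC4 x₁ x₂ y₁ y₂ hx hy (Finset.mem_filter.1 a).2 (Finset.mem_filter.1 c).2
        (Finset.mem_filter.1 b).2 (Finset.mem_filter.1 d).2)
    (fun u => by
      rw [← hdegX u]
      exact lineDeg_le_ncard (Set.toFinite _) fun y _ hy => (Finset.mem_filter.1 hy).2)
    hγ hLcard (fun y hy => by
      have := (Finset.mem_filter.1 hy).2
      intro i
      convert this i)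
  refine ⟨𝒞, ?_, fun R hR => ⟨(h2 R hR).1, ?_⟩, fun I hI hfree => h3 I hI ?_⟩
  · have hN : U.card + 1 ≤ q ^ 4 := by
      have e1 : U.card ≤ q ^ 4 - q ^ 3 + q ^ 2 := hX ▸ Finset.card_le_univ U
      have e2 : q ^ 3 ≤ q ^ 4 := Nat.pow_le_pow_right (by omega) (by norm_num)
      have e3 : q ^ 2 + 1 ≤ q ^ 3 := by nlinarith
      omega
    have hn' : (n : ℝ) ≤ (q : ℝ) ^ (2 - 1 / (((k + 1 : ℕ) : ℝ) - 1)) := by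
      rwa [Nat.cast_succ, add_sub_cancel_right]
    refine le_trans ?_ (card_bound (by omega) hN hn' (Nat.le_succ k))
    exact_mod_cast h1
  · have := (h2 R hR).2
    linarith
  · convert sparse_of_not_containsCopy (U := U) (L := L) hH hfree
end
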